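/- arXiv:2306.17272 — 12 statements merged into one kernel-verified Lean document; each statement's English description precedes it below -/
import Mathlib

section
/- Let G be a graph containing no cycle of length 4, 5, or 6 (as a subgraph), and let xy be an edge of G such that N(x) ∩ N(y) = ∅, d(x) ≥ 2 and d(y) ≥ 2. Then the following are equivalent: (1) neither x nor y is a shedding vertex of G; (2) xy is a relating edge of G. -/
open SimpleGraph

/-- A set of vertices is independent if its elements are pairwise nonadjacent. -/
def IsIndep {V : Type*} (G : SimpleGraph V) (S : Set V) : Prop :=
  S.Pairwise fun a b => ¬ G.Adj a b

/-- The closed neighborhood `N[S]` of a set of vertices. -/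
def closedNbhd {V : Type*} (G : SimpleGraph V) (S : Set V) : Set V :=
  S ∪ {x | ∃ s ∈ S, G.Adj s x}

/-- The open neighborhood `N(S) = N[S] \ S` of a set of vertices. -/
def openNbhd {V : Type*} (G : SimpleGraph V) (S : Set V) : Set V :=
  closedNbhd G S \ S

/-- `S` dominates `T` if `T ⊆ N[S]`. -/
def Dominates {V : Type*} (G : SimpleGraph V) (S T : Set V) : Prop :=
  T ⊆ closedNbhd G S

/-- `N₂(v)`: the set of vertices at distance exactly 2 from `v`. -/
def N2 {V : Type*} (G : SimpleGraph V) (v : V) : Set V :=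
  {u | u ≠ v ∧ ¬ G.Adj v u ∧ ∃ w, G.Adj v w ∧ G.Adj w u}

/-- A maximal independent set of the subgraph of `G` induced by `A`. -/
def IsMaximalIndepOn {V : Type*} (G : SimpleGraph V) (A S : Set V) : Prop :=
  S ⊆ A ∧ IsIndep G S ∧ ∀ T, T ⊆ A → IsIndep G T → S ⊆ T → S = T

/-- A maximal independent set of `G`. -/
def IsMaximalIndep {V : Type*} (G : SimpleGraph V) (S : Set V) : Prop :=
  IsMaximalIndepOn G Set.univ S

/-- A maximum independent set of the subgraph of `G` induced by `A`. -/
def IsMaxIndepOn {V : Type*} (G : SimpleGraph V) (A S : Set V) : Prop :=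
  S ⊆ A ∧ IsIndep G S ∧ ∀ T, T ⊆ A → IsIndep G T → T.ncard ≤ S.ncard

/-- A maximum independent set of `G`. -/
def IsMaxIndep {V : Type*} (G : SimpleGraph V) (S : Set V) : Prop :=
  IsMaxIndepOn G Set.univ S

/-- The independence number of the subgraph of `G` induced by `A`. -/
noncomputable def alphaOn {V : Type*} (G : SimpleGraph V) (A : Set V) : ℕ :=
  sSup {n | ∃ S, S ⊆ A ∧ IsIndep G S ∧ S.ncard = n}

/-- The independence number `α(G)`. -/
noncomputable def alpha {V : Type*} (G : SimpleGraph V) : ℕ :=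
  alphaOn G Set.univ

/-- The subgraph of `G` induced by `A` is well-covered. -/
def WellCoveredOn {V : Type*} (G : SimpleGraph V) (A : Set V) : Prop :=
  ∀ S, IsMaximalIndepOn G A S → IsMaxIndepOn G A S

/-- `G` is well-covered: every maximal independent set is maximum. -/
def WellCovered {V : Type*} (G : SimpleGraph V) : Prop :=
  WellCoveredOn G Set.univ

/-- The subgraph of `G` induced by `A` is in the class `W₂`. -/
def W2On {V : Type*} (G : SimpleGraph V) (A : Set V) : Prop :=
  ∀ S₁ S₂ : Set V, S₁ ⊆ A → S₂ ⊆ A → IsIndep G S₁ → IsIndep G S₂ → Disjoint S₁ S₂ →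
    ∃ T₁ T₂ : Set V, S₁ ⊆ T₁ ∧ S₂ ⊆ T₂ ∧ IsMaxIndepOn G A T₁ ∧ IsMaxIndepOn G A T₂ ∧
      Disjoint T₁ T₂

/-- `G` belongs to the class `W₂`: every two pairwise disjoint independent sets are
included in two pairwise disjoint maximum independent sets. -/
def W2 {V : Type*} (G : SimpleGraph V) : Prop :=
  W2On G Set.univ

/-- `v` is a shedding vertex: for every independent set `S ⊆ V(G) \ N[v]` there exists
`u ∈ N(v)` such that `S ∪ {u}` is independent. -/
def Shedding {V : Type*} (G : SimpleGraph V) (v : V) : Prop :=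
  ∀ S : Set V, Disjoint S (closedNbhd G {v}) → IsIndep G S →
    ∃ u ∈ G.neighborSet v, IsIndep G (insert u S)

/-- The edge `xy` is relating: there is an independent set `S ⊆ V(G) \ N[{x,y}]` such
that both `S ∪ {x}` and `S ∪ {y}` are maximal independent sets of `G`. -/
def Relating {V : Type*} (G : SimpleGraph V) (x y : V) : Prop :=
  ∃ S : Set V, IsIndep G S ∧ Disjoint S (closedNbhd G {x, y}) ∧
    IsMaximalIndep G (insert x S) ∧ IsMaximalIndep G (insert y S)

/-- `G` contains no cycle of length `k` (as a subgraph). -/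
def CycleFree {V : Type*} (G : SimpleGraph V) (k : ℕ) : Prop :=
  ∀ (u : V) (w : G.Walk u u), w.IsCycle → w.length ≠ k

/-- A vertex is simplicial if its closed neighborhood is a clique. -/
def Simplicial {V : Type*} (G : SimpleGraph V) (v : V) : Prop :=
  G.IsClique (closedNbhd G {v})

theorem aux_c4 {V : Type*} {G : SimpleGraph V} (h : CycleFree G 4) {a b c d : V}
    (h1 : G.Adj a b) (h2 : G.Adj b c) (h3 : G.Adj c d) (h4 : G.Adj d a)
    (hac : a ≠ c) (hbd : b ≠ d) : False := by
  refine h a (.cons h1 (.cons h2 (.cons h3 (.cons h4 .nil)))) ?_ rfl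
  have := h1.ne; have := h2.ne; have := h3.ne; have := h4.ne
  simp [Walk.cons_isCycle_iff, Walk.isPath_def]
  grind

theorem aux_c5 {V : Type*} {G : SimpleGraph V} (h : CycleFree G 5) {a b c d e : V}
    (h1 : G.Adj a b) (h2 : G.Adj b c) (h3 : G.Adj c d) (h4 : G.Adj d e) (h5 : G.Adj e a)
    (hac : a ≠ c) (had : a ≠ d) (hbd : b ≠ d) (hbe : b ≠ e) (hce : c ≠ e) : False := by
  refine h a (.cons h1 (.cons h2 (.cons h3 (.cons h4 (.cons h5 .nil))))) ?_ rfl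
  have := h1.ne; have := h2.ne; have := h3.ne; have := h4.ne; have := h5.ne
  simp [Walk.cons_isCycle_iff, Walk.isPath_def]
  grind

theorem aux_c6 {V : Type*} {G : SimpleGraph V} (h : CycleFree G 6) {a b c d e f : V}
    (h1 : G.Adj a b) (h2 : G.Adj b c) (h3 : G.Adj c d) (h4 : G.Adj d e) (h5 : G.Adj e f)
    (h6 : G.Adj f a)
    (hac : a ≠ c) (had : a ≠ d) (hae : a ≠ e) (hbd : b ≠ d) (hbe : b ≠ e) (hbf : b ≠ f)
    (hce : c ≠ e) (hcf : c ≠ f) (hdf : d ≠ f) : False := by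
  refine h a (.cons h1 (.cons h2 (.cons h3 (.cons h4 (.cons h5 (.cons h6 .nil)))))) ?_ rfl
  have := h1.ne; have := h2.ne; have := h3.ne; have := h4.ne; have := h5.ne; have := h6.ne
  simp [Walk.cons_isCycle_iff, Walk.isPath_def]
  grind

theorem aux_indep {V : Type*} {G : SimpleGraph V} {S : Set V} :
    IsIndep G S ↔ ∀ a ∈ S, ∀ b ∈ S, ¬ G.Adj a b := by
  constructor
  · intro h a ha b hb hab
    exact h ha hb hab.ne hab
  · intro h a ha b hb _
    exact h a ha b hb

theorem aux_insert {V : Type*} {G : SimpleGraph V} {S : Set V} (hS : IsIndep G S) (u : V) :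
    IsIndep G (insert u S) ↔ ∀ s ∈ S, ¬ G.Adj u s := by
  rw [aux_indep] at *
  constructor
  · intro h s hs
    exact h u (Set.mem_insert _ _) s (Set.mem_insert_of_mem _ hs)
  · rintro h a (rfl | ha) b (rfl | hb)
    · exact G.loopless.irrefl _
    · exact h b hb
    · exact fun h' => h a ha h'.symm
    · exact hS a ha b hb

theorem aux_max {V : Type*} {G : SimpleGraph V} {S : Set V} :
    IsMaximalIndep G S ↔ IsIndep G S ∧ ∀ v, v ∉ S → ∃ s ∈ S, G.Adj v s := by
  constructor
  · rintro ⟨_, hS, hm⟩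
    refine ⟨hS, fun v hv => ?_⟩
    by_contra hc
    push Not at hc
    have := hm (insert v S) (Set.subset_univ _) ((aux_insert hS v).2 hc) (Set.subset_insert _ _)
    exact hv (this ▸ Set.mem_insert _ _)
  · rintro ⟨hS, hm⟩
    refine ⟨Set.subset_univ _, hS, fun T _ hT hST => Set.Subset.antisymm hST fun v hv => ?_⟩
    by_contra hc
    obtain ⟨s, hs, hvs⟩ := hm v hc
    exact aux_indep.1 hT v hv s (hST hs) hvs

theorem aux_shed {V : Type*} {G : SimpleGraph V} {x : V} :
    ¬ Shedding G x ↔ ∃ S : Set V, IsIndep G S ∧ (∀ s ∈ S, s ≠ x ∧ ¬ G.Adj x s) ∧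
      ∀ u, G.Adj x u → ∃ s ∈ S, G.Adj u s := by
  have hd : ∀ S : Set V, Disjoint S (closedNbhd G {x}) ↔ ∀ s ∈ S, s ≠ x ∧ ¬ G.Adj x s := by
    intro S
    simp [Set.disjoint_left, closedNbhd]
  unfold Shedding
  push Not
  constructor
  · rintro ⟨S, h1, h2, h3⟩
    refine ⟨S, h2, (hd S).1 h1, fun u hu => ?_⟩
    have := h3 u hu
    rw [aux_insert h2] at this
    push Not at this
    exact this
  · rintro ⟨S, h2, h1, h3⟩
    refine ⟨S, (hd S).2 h1, h2, fun u hu => ?_⟩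
    rw [aux_insert h2]
    push Not
    exact h3 u hu

theorem aux_rel {V : Type*} {G : SimpleGraph V} {x y : V} (h5 : CycleFree G 5)
    (hxy : G.Adj x y) (hcap : ∀ v, G.Adj x v → ¬ G.Adj y v)
    (hdy : 2 ≤ (G.neighborSet y).ncard) (S : Set V) (hS : IsIndep G S)
    (hSx : ∀ s ∈ S, s ≠ x ∧ ¬ G.Adj x s) (hSy : ∀ s ∈ S, s ≠ y ∧ ¬ G.Adj y s)
    (hm : ∀ v, v ∉ insert y S → ∃ s ∈ insert y S, G.Adj v s) : ¬ Shedding G x := by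
  obtain ⟨y', hy', hne⟩ := Set.exists_ne_of_one_lt_ncard (by omega : 1 < (G.neighborSet y).ncard) x
  simp only [mem_neighborSet] at hy'
  have hI : IsIndep G {s ∈ S | ¬ G.Adj y' s} :=
    aux_indep.2 fun a ha b hb => aux_indep.1 hS a ha.1 b hb.1
  refine aux_shed.2 ⟨insert y' {s ∈ S | ¬ G.Adj y' s}, (aux_insert hI _).2 fun s hs => hs.2,
    ?_, ?_⟩
  · rintro s (rfl | hs)
    · exact ⟨hne, fun h => hcap _ h hy'⟩
    · exact hSx s hs.1
  · intro u hu
    by_cases huy : u = y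
    · subst huy
      exact ⟨y', Set.mem_insert _ _, hy'⟩
    obtain ⟨s, hs, hus⟩ := hm u (by
      rintro (h | h)
      · exact huy h
      · exact (hSx u h).2 hu)
    rcases hs with rfl | hs
    · exact absurd hus.symm (hcap u hu)
    refine ⟨s, Set.mem_insert_of_mem _ ⟨hs, fun h => ?_⟩, hus⟩
    exact aux_c5 h5 hu hus h.symm hy'.symm hxy.symm (hSx s hs).1.symm hne.symm
      (fun e => hcap u hu (e ▸ hy')) huy (hSy s hs).1

theorem aux_ext {V : Type*} [Fintype V] {G : SimpleGraph V} (A S : Set V) (hSA : S ⊆ A)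
    (hS : IsIndep G S) : ∃ T, S ⊆ T ∧ T ⊆ A ∧ IsIndep G T ∧
      ∀ v ∈ A, v ∉ T → ∃ s ∈ T, G.Adj v s := by
  obtain ⟨T, hST, hT⟩ := (Set.toFinite {T : Set V | T ⊆ A ∧ IsIndep G T}).exists_le_maximal
    (a := S) ⟨hSA, hS⟩
  refine ⟨T, hST, hT.1.1, hT.1.2, fun v hv hvT => ?_⟩
  by_contra hc
  push Not at hc
  exact hvT (hT.2 (y := insert v T) ⟨Set.insert_subset hv hT.1.1, (aux_insert hT.1.2 v).2 hc⟩
    (Set.subset_insert _ _) (Set.mem_insert _ _))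

/-- In a graph with no cycles of lengths 4, 5, 6, for an edge `xy` with
`N(x) ∩ N(y) = ∅`, `d(x) ≥ 2` and `d(y) ≥ 2`: neither `x` nor `y` is shedding iff
`xy` is a relating edge. -/
theorem stmt0 {V : Type*} [Fintype V] (G : SimpleGraph V)
    (h4 : CycleFree G 4) (h5 : CycleFree G 5) (h6 : CycleFree G 6)
    (x y : V) (hxy : G.Adj x y)
    (hcap : G.neighborSet x ∩ G.neighborSet y = ∅)
    (hdx : 2 ≤ (G.neighborSet x).ncard) (hdy : 2 ≤ (G.neighborSet y).ncard) :
    (¬ Shedding G x ∧ ¬ Shedding G y) ↔ Relating G x y := by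
  have hc : ∀ v, G.Adj x v → ¬ G.Adj y v := by
    intro v h1 h2
    have : v ∈ G.neighborSet x ∩ G.neighborSet y := ⟨h1, h2⟩
    simp [hcap] at this
  have hd : ∀ S : Set V, Disjoint S (closedNbhd G {x, y}) ↔
      (∀ s ∈ S, s ≠ x ∧ ¬ G.Adj x s) ∧ (∀ s ∈ S, s ≠ y ∧ ¬ G.Adj y s) := by
    intro S
    simp only [Set.disjoint_left, closedNbhd]
    simp
    grind
  constructor
  · rintro ⟨hx, hy⟩
    obtain ⟨A, hA, hAx, hAd⟩ := aux_shed.1 hx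
    obtain ⟨B, hB, hBy, hBd⟩ := aux_shed.1 hy
    have hA4 : ∀ s ∈ A, ∀ x', G.Adj x x' → x' ≠ y → G.Adj x' s → ¬ G.Adj y s := by
      intro s hs x' h1 h2 h3 h
      exact aux_c4 h4 h1 h3 h.symm hxy.symm (hAx s hs).1.symm h2
    have hB4 : ∀ s ∈ B, ∀ y', G.Adj y y' → y' ≠ x → G.Adj y' s → ¬ G.Adj x s := by
      intro s hs y' h1 h2 h3 h
      exact aux_c4 h4 h1 h3 h.symm hxy (hBy s hs).1.symm h2
    have key : ∀ s ∈ A, ∀ x', G.Adj x x' → x' ≠ y → G.Adj x' s →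
        ∀ t ∈ B, ∀ y', G.Adj y y' → y' ≠ x → G.Adj y' t → ¬ G.Adj s t := by
      intro s hs x' a1 a2 a3 t ht y' b1 b2 b3 h
      refine aux_c6 h6 a1 a3 h b3.symm b1.symm hxy.symm (hAx s hs).1.symm ?_ b2.symm ?_ ?_ a2 ?_ ?_
        (hBy t ht).1
      · rintro rfl; exact hc y' b3.symm b1
      · rintro rfl; exact hB4 _ ht y' b1 b2 b3 a1
      · rintro rfl; exact hc _ a1 b1
      · rintro rfl; exact hA4 _ hs x' a1 a2 a3 b1
      · rintro rfl; exact (hAx _ hs).2 hxy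
    let S : Set V := {s | s ∈ A ∧ ∃ x', G.Adj x x' ∧ x' ≠ y ∧ G.Adj x' s} ∪
      {t | t ∈ B ∧ ∃ y', G.Adj y y' ∧ y' ≠ x ∧ G.Adj y' t}
    have hSI : IsIndep G S := by
      rw [aux_indep] at hA hB ⊢
      rintro a (⟨ha, x1, p1, p2, p3⟩ | ⟨ha, x1, p1, p2, p3⟩) b
        (⟨hb, x2, q1, q2, q3⟩ | ⟨hb, x2, q1, q2, q3⟩)
      · exact hA a ha b hb
      · exact key a ha x1 p1 p2 p3 b hb x2 q1 q2 q3
      · exact fun h => key b hb x2 q1 q2 q3 a ha x1 p1 p2 p3 h.symm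
      · exact hB a ha b hb
    have hSd : Disjoint S (closedNbhd G {x, y}) := by
      rw [hd]
      constructor
      · rintro s (⟨hs, x1, p1, p2, p3⟩ | ⟨hs, x1, p1, p2, p3⟩)
        · exact hAx s hs
        · exact ⟨fun e => (hBy s hs).2 (e ▸ hxy.symm), hB4 s hs x1 p1 p2 p3⟩
      · rintro s (⟨hs, x1, p1, p2, p3⟩ | ⟨hs, x1, p1, p2, p3⟩)
        · exact ⟨fun e => (hAx s hs).2 (e ▸ hxy), hA4 s hs x1 p1 p2 p3⟩
        · exact hBy s hs
    obtain ⟨T, hST, hTA, hT, hTm⟩ := aux_ext (G := G) (closedNbhd G {x, y})ᶜ S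
      (Set.subset_compl_iff_disjoint_right.2 hSd) hSI
    have hTd := Set.subset_compl_iff_disjoint_right.1 hTA
    obtain ⟨hTx, hTy⟩ := (hd T).1 hTd
    have hdx : ∀ v, G.Adj x v → v ≠ y → ∃ s ∈ T, G.Adj v s := by
      intro v hv hvy
      obtain ⟨s, hs, hvs⟩ := hAd v hv
      exact ⟨s, hST (Or.inl ⟨hs, v, hv, hvy, hvs⟩), hvs⟩
    have hdy : ∀ v, G.Adj y v → v ≠ x → ∃ s ∈ T, G.Adj v s := by
      intro v hv hvx
      obtain ⟨s, hs, hvs⟩ := hBd v hv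
      exact ⟨s, hST (Or.inr ⟨hs, v, hv, hvx, hvs⟩), hvs⟩
    have hall : ∀ v, v ≠ x → v ≠ y → v ∉ T → ∃ s ∈ T, G.Adj v s := by
      intro v h1 h2 h3
      by_cases hvx : G.Adj x v
      · exact hdx v hvx h2
      by_cases hvy : G.Adj y v
      · exact hdy v hvy h1
      refine hTm v ?_ h3
      simp [closedNbhd, h1, h2, hvx, hvy]
    refine ⟨T, hT, hTd, aux_max.2 ⟨(aux_insert hT x).2 fun s hs => (hTx s hs).2, fun v hv => ?_⟩,
      aux_max.2 ⟨(aux_insert hT y).2 fun s hs => (hTy s hs).2, fun v hv => ?_⟩⟩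
    · simp only [Set.mem_insert_iff, not_or] at hv
      by_cases hvy : v = y
      · exact ⟨x, Set.mem_insert _ _, hvy ▸ hxy.symm⟩
      · obtain ⟨s, hs, h⟩ := hall v hv.1 hvy hv.2
        exact ⟨s, Set.mem_insert_of_mem _ hs, h⟩
    · simp only [Set.mem_insert_iff, not_or] at hv
      by_cases hvx : v = x
      · exact ⟨y, Set.mem_insert _ _, hvx ▸ hxy⟩
      · obtain ⟨s, hs, h⟩ := hall v hvx hv.1 hv.2
        exact ⟨s, Set.mem_insert_of_mem _ hs, h⟩
  · rintro ⟨S, hS, hSd, hmx, hmy⟩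
    obtain ⟨hSx, hSy⟩ := (hd S).1 hSd
    exact ⟨aux_rel h5 hxy hc hdy S hS hSx hSy (aux_max.1 hmy).2,
      aux_rel h5 hxy.symm (fun v h1 h2 => hc v h2 h1) hdx S hS hSy hSx (aux_max.1 hmx).2⟩
end

section
/- Let G be a connected graph in the class W2 with G not isomorphic to K2, and let v be any vertex of G. Then at least one of the following holds: (1) v lies on a triangle (v, v1, v2) such that the set {v1, v2} is not dominated by N2(v); (2) v lies on a cycle of length 5. -/
open SimpleGraph

theorem shed_of_W2 {V : Type*} [Fintype V] (G : SimpleGraph V) (hW2 : W2 G) (v : V)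
    (S : Set V) (hv : v ∉ S) (hS : IsIndep G S) :
    ∃ u, G.Adj v u ∧ ∀ s ∈ S, ¬ G.Adj u s := by
  obtain ⟨T₁, T₂, h1, h2, m1, m2, hd⟩ := hW2 {v} S (Set.subset_univ _) (Set.subset_univ _)
    (Set.pairwise_singleton _ _) hS (Set.disjoint_singleton_left.2 hv)
  have hvT : v ∉ T₂ := Set.disjoint_left.1 hd (h1 rfl)
  obtain ⟨-, i2, mx⟩ := m2
  by_contra hcon
  push Not at hcon
  have hn : ∀ t ∈ T₂, ¬ G.Adj v t := by
    intro t ht ha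
    obtain ⟨s, hs, hts⟩ := hcon t ha
    exact i2 ht (h2 hs) hts.ne hts
  have hI : IsIndep G (insert v T₂) := by
    intro a ha b hb hab hadj
    rcases ha with rfl | ha <;> rcases hb with rfl | hb
    · exact hab rfl
    · exact hn _ hb hadj
    · exact hn _ ha hadj.symm
    · exact i2 ha hb hab hadj
  have := mx _ (Set.subset_univ _) hI
  rw [Set.ncard_insert_of_notMem hvT (Set.toFinite _)] at this
  omega

/-- If `G` is a connected `W₂` graph not isomorphic to `K₂` and `v` is any
vertex, then either `v` is on a triangle `(v, v₁, v₂)` with `{v₁, v₂}` not dominated by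
`N₂(v)`, or `v` is on a cycle of length 5. -/
theorem stmt1 {V : Type*} [Fintype V] (G : SimpleGraph V) (hconn : G.Connected)
    (hW2 : W2 G) (hK2 : IsEmpty (G ≃g (⊤ : SimpleGraph (Fin 2)))) (v : V) :
    (∃ v₁ v₂ : V, G.Adj v v₁ ∧ G.Adj v v₂ ∧ G.Adj v₁ v₂ ∧
      ¬ Dominates G (N2 G v) {v₁, v₂}) ∨
    (∃ w : G.Walk v v, w.IsCycle ∧ w.length = 5) := by
  classical
  -- a maximal independent subset of `N2 G v`
  obtain ⟨S, hSm⟩ := (Set.toFinite {S : Set V | S ⊆ N2 G v ∧ IsIndep G S}).exists_maximal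
    ⟨∅, Set.empty_subset _, Set.pairwise_empty _⟩
  obtain ⟨⟨hS2, hSi⟩, hSmax⟩ := hSm
  obtain ⟨u, hvu, huS⟩ := shed_of_W2 G hW2 v S (fun h => (hS2 h).1 rfl) hSi
  by_cases hx : ∃ x ∈ N2 G v, G.Adj u x
  · right
    obtain ⟨x, hx2, hux⟩ := hx
    have hxS : x ∉ S := fun h => huS x h hux
    have : ∃ y ∈ S, G.Adj x y := by
      by_contra hcon
      push Not at hcon
      refine hxS (hSmax (y := insert x S) ⟨Set.insert_subset hx2 hS2, ?_⟩
        (Set.subset_insert _ _) (Set.mem_insert _ _))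
      intro a ha b hb hab hadj
      rcases ha with rfl | ha <;> rcases hb with rfl | hb
      · exact hab rfl
      · exact hcon _ hb hadj
      · exact hcon _ ha hadj.symm
      · exact hSi ha hb hab hadj
    obtain ⟨y, hyS, hxy⟩ := this
    obtain ⟨hyv, hvy, w, hvw, hwy⟩ := hS2 hyS
    obtain ⟨hxv, hvx, -⟩ := hx2
    have huy : ¬ G.Adj u y := huS y hyS
    have e1 : u ≠ w := fun h => huy (h ▸ hwy)
    have e2 : u ≠ y := fun h => hvy (h ▸ hvu)
    have e3 : x ≠ w := fun h => hvx (h ▸ hvw)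
    refine ⟨.cons hvu (.cons hux (.cons hxy (.cons hwy.symm (.cons hvw.symm .nil)))), ?_, rfl⟩
    rw [Walk.cons_isCycle_iff]
    have := hvu.ne
    have := hvw.ne
    have := hux.ne
    have := hxy.ne
    have := hwy.ne
    constructor
    · simp [Walk.isPath_def]
      grind
    · simp
      grind
  · left
    push Not at hx
    by_cases hw : ∃ w, G.Adj u w ∧ G.Adj v w
    · obtain ⟨w, huw, hvw⟩ := hw
      refine ⟨u, w, hvu, hvw, huw, fun hd => ?_⟩
      rcases hd (Set.mem_insert u _) with h | ⟨s, hs, hsu⟩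
      · exact h.2.1 hvu
      · exact hx s hs hsu.symm
    · exfalso
      push Not at hw
      have hu : ∀ w, G.Adj u w → w = v := by
        intro w huw
        by_contra hne
        exact hx w ⟨hne, hw w huw, u, hvu, huw⟩ huw
      have hv : ∀ w, G.Adj v w → w = u := by
        intro w hvw
        by_contra hne
        obtain ⟨z, huz, hz⟩ := shed_of_W2 G hW2 u {w} (fun h => hne h.symm)
          (Set.pairwise_singleton _ _)
        rw [hu z huz] at hz
        exact hz w rfl hvw
      have key : ∀ a b, G.Walk a b → (a = v ∨ a = u) → (b = v ∨ b = u) := by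
        intro a b p
        induction p with
        | nil => exact id
        | cons h p ih =>
          rintro (rfl | rfl)
          · exact ih (Or.inr (hv _ h))
          · exact ih (Or.inl (hu _ h))
      have all : ∀ b, b = v ∨ b = u := fun b => by
        obtain ⟨p⟩ := hconn.preconnected v b
        exact key v b p (Or.inl rfl)
      have hne := hvu.ne
      refine hK2.false ⟨⟨fun x => if x = v then 0 else 1, fun i => if i = 0 then v else u,
        ?_, ?_⟩, ?_⟩
      · intro b
        rcases all b with rfl | rfl <;> simp [hne.symm]
      · intro i
        fin_cases i <;> simp [hne.symm]
      · intro a b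
        rcases all a with rfl | rfl <;> rcases all b with rfl | rfl <;>
          simp [hne.symm, hvu, hvu.symm]
end

section
/- Let G be a connected graph containing neither C4 nor C5 as a subgraph. Then the following are equivalent: (1) G belongs to the class W2; (2) either G is isomorphic to K2, or there exists a partition {T1, T2, ..., Tk} of V(G) such that for each 1 ≤ i ≤ k the induced subgraph G[Ti] is a triangle containing at least two simplicial vertices of G. -/
open SimpleGraph

theorem no_c4 {V : Type*} {G : SimpleGraph V} (h4 : CycleFree G 4) {a b c d : V}
    (h1 : G.Adj a b) (h2 : G.Adj b c) (h3 : G.Adj c d) (h4' : G.Adj d a)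
    (hac : a ≠ c) (hbd : b ≠ d) : False := by
  have := h1.ne; have := h2.ne; have := h3.ne; have := h4'.ne
  refine h4 a (.cons h1 (.cons h2 (.cons h3 (.cons h4' .nil)))) ?_ rfl
  rw [Walk.isCycle_def, Walk.isTrail_def]
  refine ⟨?_, by simp, ?_⟩
  · simp; grind
  · simp; grind

theorem no_c5 {V : Type*} {G : SimpleGraph V} (h5 : CycleFree G 5) {a b c d e : V}
    (h1 : G.Adj a b) (h2 : G.Adj b c) (h3 : G.Adj c d) (h4' : G.Adj d e) (h5' : G.Adj e a)
    (hac : a ≠ c) (had : a ≠ d) (hbd : b ≠ d) (hbe : b ≠ e) (hce : c ≠ e) : False := by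
  have := h1.ne; have := h2.ne; have := h3.ne; have := h4'.ne; have := h5'.ne
  refine h5 a (.cons h1 (.cons h2 (.cons h3 (.cons h4' (.cons h5' .nil))))) ?_ rfl
  rw [Walk.isCycle_def, Walk.isTrail_def]
  refine ⟨?_, by simp, ?_⟩
  · simp; grind
  · simp; grind

/-- Extension lemma for the backward direction. -/
theorem extend_indep {V : Type*} [Fintype V] [Nonempty V] (G : SimpleGraph V) (P : Set (Set V))
    (hP : Setoid.IsPartition P)
    (hT : ∀ T ∈ P, G.IsClique T ∧ ∃ s₁ ∈ T, ∃ s₂ ∈ T, s₁ ≠ s₂ ∧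
      (∀ c, G.Adj s₁ c → c ∈ T) ∧ (∀ c, G.Adj s₂ c → c ∈ T))
    (S X : Set V) (hS : IsIndep G S) (hX : IsIndep G X) (hd : Disjoint S X) :
    ∃ S', S ⊆ S' ∧ IsMaxIndepOn G Set.univ S' ∧ Disjoint S' X := by
  have hex : ∀ T ∈ P, ∃ s ∈ T, s ∉ X ∧ ∀ c, G.Adj s c → c ∈ T := by
    intro T hTP
    obtain ⟨hc, s₁, m1, s₂, m2, hne, h1, h2⟩ := hT T hTP
    by_cases hx : s₁ ∈ X
    · refine ⟨s₂, m2, fun hx2 => hX hx hx2 hne (hc m1 m2 hne), h2⟩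
    · exact ⟨s₁, m1, hx, h1⟩
  choose! f hf1 hf2 hf3 using hex
  have huniq : ∀ T ∈ P, ∀ T' ∈ P, ∀ a, a ∈ T → a ∈ T' → T = T' := by
    intro T h1 T' h2 a h3 h4
    exact (hP.2 a).unique ⟨h1, h3⟩ ⟨h2, h4⟩
  let S' : Set V := S ∪ {x | ∃ T ∈ P, Disjoint S T ∧ x = f T}
  have key : ∀ a ∈ S', ∀ T ∈ P, Disjoint S T → a ≠ f T → ¬ G.Adj (f T) a := by
    intro a ha T hTP hdis hne hadj
    have haT := hf3 T hTP a hadj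
    rcases ha with ha | ⟨T', hT', _, rfl⟩
    · exact Set.disjoint_left.1 hdis ha haT
    · exact hne (by rw [huniq T' hT' T hTP _ (hf1 T' hT') haT])
  refine ⟨S', Set.subset_union_left, ⟨Set.subset_univ _, ?_, ?_⟩, ?_⟩
  · intro a ha b hb hne hadj
    rcases id ha with ha' | ⟨T, hTP, hdis, rfl⟩
    · rcases id hb with hb' | ⟨T, hTP, hdis, rfl⟩
      · exact hS ha' hb' hne hadj
      · exact key a ha T hTP hdis hne hadj.symm
    · exact key b hb T hTP hdis hne.symm hadj
  · intro T _ hTi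
    have hm : ∀ t : V, ∃ Q ∈ P, t ∈ Q ∧ ∃ s ∈ S', s ∈ Q := by
      intro t
      obtain ⟨Q, ⟨hQ, htQ⟩, _⟩ := hP.2 t
      refine ⟨Q, hQ, htQ, ?_⟩
      by_cases hdis : Disjoint S Q
      · exact ⟨f Q, Or.inr ⟨Q, hQ, hdis, rfl⟩, hf1 Q hQ⟩
      · obtain ⟨s, h1, h2⟩ := Set.not_disjoint_iff.1 hdis
        exact ⟨s, Or.inl h1, h2⟩
    choose Q hQ htQ g hg hgQ using hm
    refine Set.ncard_le_ncard_of_injOn g (fun a _ => hg a) ?_ (Set.toFinite _)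
    intro a ha b hb hab
    by_contra hne
    have := huniq _ (hQ a) _ (hQ b) (g a) (hgQ a) (hab ▸ hgQ b)
    exact hTi ha hb hne ((hT _ (hQ a)).1 (htQ a) (this ▸ htQ b) hne)
  · rw [Set.disjoint_left]
    rintro a (ha | ⟨T, hTP, _, rfl⟩)
    · exact Set.disjoint_left.1 hd ha
    · exact hf2 T hTP

theorem w2_of_partition {V : Type*} [Fintype V] [Nonempty V] (G : SimpleGraph V) (P : Set (Set V))
    (hP : Setoid.IsPartition P)
    (hT : ∀ T ∈ P, G.IsClique T ∧ ∃ s₁ ∈ T, ∃ s₂ ∈ T, s₁ ≠ s₂ ∧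
      (∀ c, G.Adj s₁ c → c ∈ T) ∧ (∀ c, G.Adj s₂ c → c ∈ T)) : W2 G := by
  intro S₁ S₂ _ _ h1 h2 hd
  obtain ⟨T₁, a1, a2, a3⟩ := extend_indep G P hP hT S₁ S₂ h1 h2 hd
  obtain ⟨T₂, b1, b2, b3⟩ := extend_indep G P hP hT S₂ T₁ h2 a2.2.1 a3.symm
  exact ⟨T₁, T₂, a1, b1, a2, b2, b3.symm⟩

theorem w2_nbr {V : Type*} [Fintype V] (G : SimpleGraph V) (h5 : CycleFree G 5) (hW : W2 G)
    (v : V) : ∃ a, G.Adj v a ∧ ∀ c, G.Adj a c → c = v ∨ G.Adj v c := by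
  by_contra! hcon
  choose! f hf1 hf2 hf3 using hcon
  have hSi : IsIndep G (f '' G.neighborSet v) := by
    rintro _ ⟨a, ha, rfl⟩ _ ⟨b, hb, rfl⟩ hne hadj
    rw [mem_neighborSet] at ha hb
    refine no_c5 h5 ha (hf1 a ha) hadj (hf1 b hb).symm hb.symm (hf2 a ha).symm (hf2 b hb).symm
      ?_ ?_ ?_
    · rintro h; exact hf3 b hb (h ▸ ha)
    · rintro rfl; exact hne rfl
    · rintro h; exact hf3 a ha (h ▸ hb)
  have hvS : Disjoint (f '' G.neighborSet v) {v} := by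
    rw [Set.disjoint_singleton_right]
    rintro ⟨a, ha, h⟩
    exact hf2 a ha h
  obtain ⟨T₁, T₂, h1, h2, h3, h4, hd⟩ := hW _ {v} (Set.subset_univ _) (Set.subset_univ _) hSi
    (Set.pairwise_singleton _ _) hvS
  have hvT : v ∉ T₁ := fun h => Set.disjoint_left.1 hd h (h2 rfl)
  have : ¬ IsIndep G (insert v T₁) := by
    intro hi
    have := h3.2.2 _ (Set.subset_univ _) hi
    rw [Set.ncard_insert_of_notMem hvT (Set.toFinite _)] at this
    omega
  apply this
  have hsym : Std.Symm (fun a b => ¬ G.Adj a b) := ⟨fun a b h h' => h h'.symm⟩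
  rw [IsIndep, Set.pairwise_insert_of_symm]
  refine ⟨h3.2.1, fun u hu _ hadj => ?_⟩
  have hfu : f u ∈ T₁ := h1 ⟨u, hadj, rfl⟩
  exact h3.2.1 hu hfu (hf1 u hadj).ne (hf1 u hadj)

theorem w2_uniq {V : Type*} [Fintype V] (G : SimpleGraph V) (hW : W2 G)
    (T T' : Set V) (hT : G.IsClique T) (hT' : G.IsClique T') (x x' v : V)
    (hx : x ∈ T) (hx' : x' ∈ T') (hN : ∀ c, G.Adj x c → c ∈ T) (hN' : ∀ c, G.Adj x' c → c ∈ T')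
    (hv : v ∈ T) (hv' : v ∈ T') : T = T' := by
  have sub : ∀ (T T' : Set V) (x : V), G.IsClique T' → x ∈ T → x ∈ T' →
      (∀ c, G.Adj x c → c ∈ T) → T' ⊆ T := by
    intro T T' x hc h1 h2 h3 y hy
    by_cases hxy : x = y
    · exact hxy ▸ h1
    · exact h3 y (hc h2 hy hxy)
  by_cases c1 : x ∈ T'
  · have := sub T T' x hT' hx c1 hN
    exact (sub T' T x' hT hx' (this hx') hN').antisymm this
  by_cases c2 : x' ∈ T
  · have := sub T' T x' hT hx' c2 hN'
    exact this.antisymm (sub T T' x hT' hx (this hx) hN)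
  exfalso
  obtain ⟨S, _, h1, _, h3, _, _⟩ := hW {v} ∅ (Set.subset_univ _) (Set.subset_univ _)
    (Set.pairwise_singleton _ _) (Set.pairwise_empty _) (Set.disjoint_empty _)
  have hvS : v ∈ S := h1 rfl
  have hxv : x ≠ v := by rintro rfl; exact c1 hv'
  have hxv' : x' ≠ v := by rintro rfl; exact c2 hv
  have hxx : x ≠ x' := by rintro rfl; exact c1 hx'
  have hSx : ∀ s ∈ S \ {v}, s ∉ T := by
    rintro s ⟨hs, hsv⟩ hsT
    exact h3.2.1 hs hvS hsv (hT hsT hv hsv)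
  have hSx' : ∀ s ∈ S \ {v}, s ∉ T' := by
    rintro s ⟨hs, hsv⟩ hsT
    exact h3.2.1 hs hvS hsv (hT' hsT hv' hsv)
  have hsym : Std.Symm (fun a b => ¬ G.Adj a b) := ⟨fun a b h h' => h h'.symm⟩
  have hi : IsIndep G (insert x (insert x' (S \ {v}))) := by
    rw [IsIndep, Set.pairwise_insert_of_symm, Set.pairwise_insert_of_symm]
    refine ⟨⟨h3.2.1.mono Set.diff_subset, fun b hb _ h => hSx' b hb (hN' b h)⟩, ?_⟩
    rintro b (rfl | hb) _ h
    · exact c2 (hN _ h)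
    · exact hSx b hb (hN b h)
  have hle := h3.2.2 _ (Set.subset_univ _) hi
  rw [Set.ncard_insert_of_notMem _ (Set.toFinite _),
    Set.ncard_insert_of_notMem _ (Set.toFinite _)] at hle
  · have := Set.ncard_sdiff_singleton_add_one hvS (Set.toFinite _)
    omega
  · exact fun h => hSx' _ h hx'
  · rintro (h | h)
    · exact hxx h
    · exact hSx _ h hx

theorem iso_k2 {V : Type*} [Fintype V] (G : SimpleGraph V) (hconn : G.Connected) (a v : V)
    (hav : G.Adj a v) (h1 : ∀ c, G.Adj a c → c = v) (h2 : ∀ c, G.Adj v c → c = a) :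
    Nonempty (G ≃g (⊤ : SimpleGraph (Fin 2))) := by
  classical
  have hall : ∀ w, w = a ∨ w = v := by
    intro w
    obtain ⟨p⟩ := hconn.preconnected w a
    induction p with
    | nil => exact Or.inl rfl
    | cons h p ih =>
      rcases ih hav h1 h2 with rfl | rfl
      · exact Or.inr (h1 _ h.symm)
      · exact Or.inl (h2 _ h.symm)
  have hcard : Fintype.card V = 2 := by
    rw [← Finset.card_univ, show (Finset.univ : Finset V) = {a, v} by
      ext w; simpa using hall w]
    exact Finset.card_pair hav.ne
  have hG : G = ⊤ := by
    ext x y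
    rw [top_adj]
    refine ⟨fun h => h.ne, fun h => ?_⟩
    rcases hall x with rfl | rfl <;> rcases hall y with rfl | rfl
    · exact absurd rfl h
    · exact hav
    · exact hav.symm
    · exact absurd rfl h
  subst hG
  exact ⟨Iso.completeGraph (Fintype.equivFinOfCardEq hcard)⟩

theorem simplicial_nbr {V : Type*} {G : SimpleGraph V} (h4 : CycleFree G 4) {T : Set V}
    {a b c : V} (hT : T = {a, b, c}) (hab : G.Adj a b) (hac : G.Adj a c) (hbc : G.Adj b c)
    {s : V} (hs : s ∈ T) (hsimp : Simplicial G s) : ∀ d, G.Adj s d → d ∈ T := by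
  have main : ∀ s p q : V, Simplicial G s → G.Adj s p → G.Adj s q → G.Adj p q →
      ∀ d, G.Adj s d → d = p ∨ d = q := by
    intro s p q hs hp hq hpq d hd
    by_contra! h
    have hdp : G.Adj d p := hs (Or.inr ⟨s, rfl, hd⟩) (Or.inr ⟨s, rfl, hp⟩) h.1
    exact no_c4 h4 hd hdp hpq hq.symm hp.ne h.2
  intro d hd
  subst hT
  simp only [Set.mem_insert_iff, Set.mem_singleton_iff] at hs ⊢
  rcases hs with rfl | rfl | rfl
  · have := main _ _ _ hsimp hab hac hbc d hd; tauto
  · have := main _ _ _ hsimp hab.symm hbc hac d hd; tauto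
  · have := main _ _ _ hsimp hac.symm hbc.symm hab d hd; tauto

theorem simplicial_of_nbr {V : Type*} {G : SimpleGraph V} {T : Set V} (hT : G.IsClique T)
    {s : V} (hs : s ∈ T) (h : ∀ d, G.Adj s d → d ∈ T) : Simplicial G s := by
  refine Set.Pairwise.mono ?_ hT
  rintro x (rfl | ⟨y, rfl, hx⟩)
  · exact hs
  · exact h _ hx

theorem clique_triple {V : Type*} {G : SimpleGraph V} {a b c : V}
    (hab : G.Adj a b) (hac : G.Adj a c) (hbc : G.Adj b c) : G.IsClique ({a, b, c} : Set V) := by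
  have := hab.symm; have := hac.symm; have := hbc.symm
  intro x hx y hy hne
  simp only [Set.mem_insert_iff, Set.mem_singleton_iff] at hx hy
  rcases hx with rfl | rfl | rfl <;> rcases hy with rfl | rfl | rfl <;> first | assumption | exact absurd rfl hne

/-- A triangle `{x, y, z}` whose vertices `x` and `y` have no neighbours outside it. -/
def GoodTri {V : Type*} (G : SimpleGraph V) (T : Set V) : Prop :=
  ∃ x y z : V, T = {x, y, z} ∧ G.Adj x y ∧ G.Adj x z ∧ G.Adj y z ∧
    (∀ c, G.Adj x c → c ∈ T) ∧ (∀ c, G.Adj y c → c ∈ T)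

theorem exists_good {V : Type*} [Fintype V] (G : SimpleGraph V) (hconn : G.Connected)
    (h4 : CycleFree G 4) (h5 : CycleFree G 5) (hW : W2 G)
    (hK : ¬ Nonempty (G ≃g (⊤ : SimpleGraph (Fin 2)))) (v : V) : ∃ T, GoodTri G T ∧ v ∈ T := by
  obtain ⟨a, hva, ha⟩ := w2_nbr G h5 hW v
  obtain ⟨w, haw, hw⟩ := w2_nbr G h5 hW a
  have hb : ∃ b, G.Adj a b ∧ b ≠ v := by
    by_contra! hb
    obtain rfl := hb w haw
    refine hK (iso_k2 G hconn a w haw hb fun c hc => ?_)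
    rcases hw c hc with h | h
    · exact h
    · exact absurd (hb c h) hc.ne'
  obtain ⟨b, hab, hbv⟩ := hb
  have hvb : G.Adj v b := (ha b hab).resolve_left hbv
  have hNa : ∀ c, G.Adj a c → c = v ∨ c = b := by
    intro c hc
    by_contra! h
    have := (ha c hc).resolve_left h.1
    exact no_c4 h4 hc this.symm hvb hab.symm hva.ne' h.2
  have hNa' : ∀ c, G.Adj w c → c = a ∨ c = v ∨ c = b := by
    intro c hc
    rcases hw c hc with h | h
    · exact Or.inl h
    · exact Or.inr (hNa c h)
  rcases hNa w haw with rfl | rfl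
  · refine ⟨{a, w, b}, ⟨a, w, b, rfl, haw, hab, hvb, ?_, ?_⟩, by simp⟩
    · intro c hc; exact Or.inr (hNa c hc)
    · intro c hc; exact hNa' c hc
  · refine ⟨{a, w, v}, ⟨a, w, v, rfl, haw, hva.symm, hvb.symm, ?_, ?_⟩, by simp⟩
    · intro c hc; exact Or.inr (hNa c hc).symm
    · intro c hc; have := hNa' c hc; simp; tauto

/-- A connected graph with neither `C₄` nor `C₅` as a subgraph is in `W₂`
iff it is isomorphic to `K₂` or its vertex set can be partitioned into triangles, each
containing at least two simplicial vertices of `G`. -/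
theorem stmt3 {V : Type*} [Fintype V] (G : SimpleGraph V) (hconn : G.Connected)
    (h4 : CycleFree G 4) (h5 : CycleFree G 5) :
    W2 G ↔
      (Nonempty (G ≃g (⊤ : SimpleGraph (Fin 2))) ∨
        ∃ P : Set (Set V), Setoid.IsPartition P ∧
          ∀ T ∈ P, ∃ a b c : V, a ≠ b ∧ a ≠ c ∧ b ≠ c ∧ T = {a, b, c} ∧
            G.Adj a b ∧ G.Adj a c ∧ G.Adj b c ∧
            ∃ s₁ ∈ T, ∃ s₂ ∈ T, s₁ ≠ s₂ ∧ Simplicial G s₁ ∧ Simplicial G s₂) := by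
  constructor
  · intro hW
    by_cases hK : Nonempty (G ≃g (⊤ : SimpleGraph (Fin 2)))
    · exact Or.inl hK
    right
    refine ⟨{T | GoodTri G T}, ⟨?_, ?_⟩, ?_⟩
    · rintro ⟨x, y, z, h, _⟩
      exact Set.notMem_empty x (h ▸ Set.mem_insert x _)
    · intro v
      obtain ⟨T, hT, hv⟩ := exists_good G hconn h4 h5 hW hK v
      refine ⟨T, ⟨hT, hv⟩, ?_⟩
      rintro T' ⟨hT', hv'⟩
      obtain ⟨x, y, z, rfl, e1, e2, e3, n1, _⟩ := hT
      obtain ⟨x', y', z', rfl, e1', e2', e3', n1', _⟩ := hT'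
      exact w2_uniq G hW _ _ (clique_triple e1' e2' e3') (clique_triple e1 e2 e3) x' x v
        (Set.mem_insert _ _) (Set.mem_insert _ _) n1' n1 hv' hv
    · rintro T ⟨x, y, z, rfl, e1, e2, e3, n1, n2⟩
      have hc := clique_triple e1 e2 e3
      exact ⟨x, y, z, e1.ne, e2.ne, e3.ne, rfl, e1, e2, e3, x, by simp, y, by simp, e1.ne,
        simplicial_of_nbr hc (by simp) n1, simplicial_of_nbr hc (by simp) n2⟩
  · have := hconn.nonempty
    rintro (⟨⟨φ⟩⟩ | ⟨P, hP, hT⟩)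
    · refine w2_of_partition G {Set.univ} ⟨?_, ?_⟩ ?_
      · intro h
        exact Set.notMem_empty (φ.symm 0) ((Set.mem_singleton_iff.1 h) ▸ Set.mem_univ _)
      · intro a
        exact ⟨Set.univ, ⟨rfl, Set.mem_univ _⟩, fun T h => h.1⟩
      · rintro T rfl
        refine ⟨?_, φ.symm 0, Set.mem_univ _, φ.symm 1, Set.mem_univ _, ?_, ?_, ?_⟩
        · intro x _ y _ hne
          rw [← φ.map_adj_iff]
          exact fun h => hne (φ.injective h)
        · intro h
          exact absurd (φ.symm.injective h) (by decide)
        · exact fun _ _ => Set.mem_univ _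
        · exact fun _ _ => Set.mem_univ _
    · refine w2_of_partition G P hP fun T hTP => ?_
      obtain ⟨a, b, c, _, _, _, hTe, e1, e2, e3, s₁, m1, s₂, m2, hne, q1, q2⟩ := hT T hTP
      refine ⟨hTe ▸ clique_triple e1 e2 e3, s₁, m1, s₂, m2, hne, ?_, ?_⟩
      · exact simplicial_nbr h4 hTe e1 e2 e3 m1 q1
      · exact simplicial_nbr h4 hTe e1 e2 e3 m2 q2
end

section
/- The only connected graphs with girth at least 5 that belong to the class W2 are C5 and K2; that is, if G is a connected graph of girth at least 5 and G ∈ W2, then G is isomorphic to C5 or to K2. -/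
open SimpleGraph

/-- The set-relative shedding property used in the induction. -/
def ShedOn {V : Type*} (G : SimpleGraph V) (A : Set V) : Prop :=
  ∀ v ∈ A, ∀ S : Set V, S ⊆ A → IsIndep G S → (∀ s ∈ S, s ≠ v ∧ ¬ G.Adj v s) →
    ∃ u ∈ A, G.Adj v u ∧ ∀ s ∈ S, ¬ G.Adj u s

theorem shedOn_univ {V : Type*} [Fintype V] (G : SimpleGraph V) (h : W2 G) :
    ShedOn G Set.univ := by
  intro v _ S _ hS hv
  by_contra! hc
  obtain ⟨T₁, T₂, h1, h2, m1, m2, hd⟩ := h S {v} (Set.subset_univ _) (Set.subset_univ _) hS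
    (by simp [IsIndep]) (by
      rw [Set.disjoint_singleton_right]
      intro hvS
      exact (hv v hvS).1 rfl)
  have hvT : v ∉ T₁ := fun hv1 => Set.disjoint_left.1 hd hv1 (h2 rfl)
  have hn : ∀ u ∈ T₁, ¬ G.Adj v u := by
    intro u hu hvu
    obtain ⟨s, hs, hus⟩ := hc u trivial hvu
    exact m1.2.1 hu (h1 hs) hus.ne hus
  have hI : IsIndep G (insert v T₁) := by
    have := m1.2.1
    unfold IsIndep at *
    intro a ha b hb hab hadj
    rcases ha with rfl | ha <;> rcases hb with rfl | hb
    · exact hab rfl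
    · exact hn b hb hadj
    · exact hn a ha hadj.symm
    · exact this ha hb hab hadj
  have := m1.2.2 _ (Set.subset_univ _) hI
  rw [Set.ncard_insert_of_notMem hvT (Set.toFinite _)] at this
  omega

theorem shedOn_diff {V : Type*} (G : SimpleGraph V) (A : Set V) (h : ShedOn G A) (x : V)
    (hx : x ∈ A) : ShedOn G {y | y ∈ A ∧ y ≠ x ∧ ¬ G.Adj x y} := by
  intro v hv S hSA hS hvS
  obtain ⟨u, hu, hvu, hus⟩ := h v hv.1 (insert x S) (by
      rintro s (rfl | hs)
      · exact hx
      · exact (hSA hs).1) (by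
      intro a ha b hb hab hadj
      rcases ha with rfl | ha <;> rcases hb with rfl | hb
      · exact hab rfl
      · exact (hSA hb).2.2 hadj
      · exact (hSA ha).2.2 hadj.symm
      · exact hS ha hb hab hadj) (by
      rintro s (rfl | hs)
      · exact ⟨fun e => hv.2.1 e.symm, fun e => hv.2.2 e.symm⟩
      · exact hvS s hs)
  have h1 := hus x (Set.mem_insert _ _)
  refine ⟨u, ⟨hu, ?_, fun e => h1 e.symm⟩, hvu, fun s hs => hus s (Set.mem_insert_of_mem _ hs)⟩
  rintro rfl
  exact hv.2.2 hvu.symm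

theorem shed1 {V : Type*} {G : SimpleGraph V} {A : Set V} (h : ShedOn G A) {v a : V}
    (hv : v ∈ A) (ha : a ∈ A) (hav : a ≠ v) (hn : ¬ G.Adj v a) :
    ∃ u ∈ A, G.Adj v u ∧ ¬ G.Adj u a := by
  obtain ⟨u, hu, hvu, hs⟩ := h v hv {a} (by simpa using ha) (by simp [IsIndep])
    (by simp [hav, hn])
  exact ⟨u, hu, hvu, hs a rfl⟩

theorem shed2 {V : Type*} {G : SimpleGraph V} {A : Set V} (h : ShedOn G A) {v a b : V}
    (hv : v ∈ A) (ha : a ∈ A) (hb : b ∈ A) (hav : a ≠ v) (hbv : b ≠ v)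
    (hn : ¬ G.Adj v a) (hn' : ¬ G.Adj v b) (hab : ¬ G.Adj a b) :
    ∃ u ∈ A, G.Adj v u ∧ ¬ G.Adj u a ∧ ¬ G.Adj u b := by
  have hba : ¬ G.Adj b a := fun e => hab e.symm
  obtain ⟨u, hu, hvu, hs⟩ := h v hv {a, b} (by intro x hx; grind)
    (by intro x hx y hy hxy; grind) (by intro x hx; grind)
  exact ⟨u, hu, hvu, hs a (by simp), hs b (by simp)⟩

theorem shed3 {V : Type*} {G : SimpleGraph V} {A : Set V} (h : ShedOn G A) {v a b c : V}
    (hv : v ∈ A) (ha : a ∈ A) (hb : b ∈ A) (hc : c ∈ A) (hav : a ≠ v) (hbv : b ≠ v) (hcv : c ≠ v)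
    (hn : ¬ G.Adj v a) (hn' : ¬ G.Adj v b) (hn'' : ¬ G.Adj v c) (hab : ¬ G.Adj a b)
    (hac : ¬ G.Adj a c) (hbc : ¬ G.Adj b c) :
    ∃ u ∈ A, G.Adj v u ∧ ¬ G.Adj u a ∧ ¬ G.Adj u b ∧ ¬ G.Adj u c := by
  have hba : ¬ G.Adj b a := fun e => hab e.symm
  have hca : ¬ G.Adj c a := fun e => hac e.symm
  have hcb : ¬ G.Adj c b := fun e => hbc e.symm
  obtain ⟨u, hu, hvu, hs⟩ := h v hv {a, b, c} (by intro x hx; grind)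
    (by intro x hx y hy hxy; grind) (by intro x hx; grind)
  exact ⟨u, hu, hvu, hs a (by simp), hs b (by simp), hs c (by simp)⟩

/-- No triangles. -/
def T3 {V : Type*} (G : SimpleGraph V) : Prop :=
  ∀ a b c, G.Adj a b → G.Adj b c → G.Adj a c → False

/-- No four-cycles. -/
def T4 {V : Type*} (G : SimpleGraph V) : Prop :=
  ∀ a b c d, G.Adj a b → G.Adj b c → G.Adj a d → G.Adj d c → a ≠ c → b = d

theorem t3_of {V : Type*} (G : SimpleGraph V) (h : 5 ≤ G.egirth) : T3 G := by
  intro a b c hab hbc hac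
  have := SimpleGraph.le_egirth.1 h a (Walk.cons hab (Walk.cons hbc (Walk.cons hac.symm Walk.nil)))
    (by
      have := hab.ne; have := hbc.ne; have := hac.ne
      simp [Walk.isCycle_def, Walk.isTrail_def]
      grind)
  simp at this
  norm_cast at this

theorem t4_of {V : Type*} (G : SimpleGraph V) (h : 5 ≤ G.egirth) : T4 G := by
  intro a b c d hab hbc had hdc hac
  by_contra hbd
  have := SimpleGraph.le_egirth.1 h a
    (Walk.cons hab (Walk.cons hbc (Walk.cons hdc.symm (Walk.cons had.symm Walk.nil))))
    (by
      have := hab.ne; have := hbc.ne; have := had.ne; have := hdc.ne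
      simp [Walk.isCycle_def, Walk.isTrail_def]
      grind)
  simp at this
  norm_cast at this

/-- neighbours of a vertex of degree at least three have degree at least three -/
theorem ge3 {V : Type*} {G : SimpleGraph V} (t3 : T3 G) (t4 : T4 G) {A : Set V} (h : ShedOn G A)
    {v u x y : V} (hv : v ∈ A) (hu : u ∈ A) (hx : x ∈ A) (hy : y ∈ A)
    (vu : G.Adj v u) (vx : G.Adj v x) (vy : G.Adj v y) (hux : u ≠ x) (huy : u ≠ y) (hxy : x ≠ y) :
    ∃ w ∈ A, ∃ w' ∈ A, w ≠ w' ∧ w ≠ v ∧ w' ≠ v ∧ G.Adj u w ∧ G.Adj u w' := by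
  obtain ⟨w, hw, uw, nwx⟩ := shed1 h hu hx hux.symm (fun e => t3 v u x vu e vx)
  have hwv : w ≠ v := by rintro rfl; exact nwx vx
  obtain ⟨z, hz, wz, nzv⟩ := shed1 h hw hv hwv.symm (fun e => t3 v u w vu uw e.symm)
  have hzu : z ≠ u := by rintro rfl; exact nzv vu.symm
  have nuz : ¬ G.Adj u z := fun e => t3 u w z uw wz e
  have hvz : v ≠ z := by rintro rfl; exact t3 v u w vu uw wz.symm
  have key : ∀ x', x' ∈ A → G.Adj v x' → u ≠ x' → ¬ G.Adj x' z → 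
     ∃ w ∈ A, ∃ w' ∈ A, w ≠ w' ∧ w ≠ v ∧ w' ≠ v ∧ G.Adj u w ∧ G.Adj u w' := by
    intro x' hx' vx' hux' n
    obtain ⟨w', hw', uw', n1, n2⟩ := shed2 h hu hx' hz hux'.symm hzu
      (fun e => t3 v u x' vu e vx') nuz n
    refine ⟨w, hw, w', hw', ?_, hwv, ?_, uw, uw'⟩
    · rintro rfl; exact n2 wz
    · rintro rfl; exact n1 vx'
  by_cases c : G.Adj x z
  · refine key y hy vy huy (fun c' => hxy (t4 v x z y vx c vy c' hvz))
  · exact key x hx vx hux c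

theorem final3 {V : Type*} {G : SimpleGraph V} (t3 : T3 G) (t4 : T4 G) {A : Set V}
    (h : ShedOn G A) {v u₁ u₂ u₃ p q a a' b b' : V} (hv : v ∈ A)
    (vu₁ : G.Adj v u₁) (vu₂ : G.Adj v u₂) (vu₃ : G.Adj v u₃)
    (h12 : u₁ ≠ u₂) (h13 : u₁ ≠ u₃) (h23 : u₂ ≠ u₃)
    (only : ∀ u ∈ A, G.Adj v u → u = u₁ ∨ u = u₂ ∨ u = u₃)
    (hp : p ∈ A) (hq : q ∈ A) (ha : a ∈ A) (ha' : a' ∈ A) (hb : b ∈ A) (hb' : b' ∈ A)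
    (hpq : p ≠ q) (haa : a ≠ a') (hbb : b ≠ b')
    (up : G.Adj u₁ p) (uq : G.Adj u₁ q) (ua : G.Adj u₂ a) (ua' : G.Adj u₂ a')
    (ub : G.Adj u₃ b) (ub' : G.Adj u₃ b')
    (pv : p ≠ v) (qv : q ≠ v) (av : a ≠ v) (av' : a' ≠ v) (bv : b ≠ v) (bv' : b' ≠ v) : False := by
  have key : ∀ x y z, x ∈ A → y ∈ A → z ∈ A → x ≠ v → y ≠ v → z ≠ v → G.Adj u₁ x → G.Adj u₂ y →
      G.Adj u₃ z → G.Adj x y ∨ G.Adj x z ∨ G.Adj y z := by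
    intro x y z hx hy hz xv yv zv ux uy uz
    by_contra! hc
    obtain ⟨u, hu, vu, n1, n2, n3⟩ := shed3 h hv hx hy hz xv yv zv
      (fun e => t3 v u₁ x vu₁ ux e) (fun e => t3 v u₂ y vu₂ uy e) (fun e => t3 v u₃ z vu₃ uz e)
      hc.1 hc.2.1 hc.2.2
    rcases only u hu vu with rfl | rfl | rfl
    · exact n1 ux
    · exact n2 uy
    · exact n3 uz
  -- matchings
  have m : ∀ w w' x u u' y, G.Adj v u → G.Adj v u' → u ≠ u' → G.Adj u x → G.Adj u' w → G.Adj u' w' →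
      w ≠ w' → x ≠ v → y = x → G.Adj x w → G.Adj x w' → False := by
    intro w w' x u u' y vu vu' huu ux uw uw' hww xv _ xw xw'
    refine hww (t4 x w u' w' xw uw.symm xw' uw'.symm ?_)
    rintro rfl
    exact t3 v u x vu ux vu'
  have k1 := key p a b hp ha hb pv av bv up ua ub
  have k2 := key p a b' hp ha hb' pv av bv' up ua ub'
  have k3 := key p a' b hp ha' hb pv av' bv up ua' ub
  have k4 := key p a' b' hp ha' hb' pv av' bv' up ua' ub'
  have l1 := key q a b hq ha hb qv av bv uq ua ub
  have l2 := key q a b' hq ha hb' qv av bv' uq ua ub'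
  have l3 := key q a' b hq ha' hb qv av' bv uq ua' ub
  have l4 := key q a' b' hq ha' hb' qv av' bv' uq ua' ub'
  have m1 := m a a' p u₁ u₂ p vu₁ vu₂ h12 up ua ua' haa pv rfl
  have m2 := m a a' q u₁ u₂ q vu₁ vu₂ h12 uq ua ua' haa qv rfl
  have m3 := m b b' p u₁ u₃ p vu₁ vu₃ h13 up ub ub' hbb pv rfl
  have m4 := m b b' q u₁ u₃ q vu₁ vu₃ h13 uq ub ub' hbb qv rfl
  have m5 := m b b' a u₂ u₃ a vu₂ vu₃ h23 ua ub ub' hbb av rfl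
  have m6 := m b b' a' u₂ u₃ a' vu₂ vu₃ h23 ua' ub ub' hbb av' rfl
  have n1 := m p q a u₂ u₁ a vu₂ vu₁ h12.symm ua up uq hpq av rfl
  have n2 := m p q a' u₂ u₁ a' vu₂ vu₁ h12.symm ua' up uq hpq av' rfl
  have n3 := m p q b u₃ u₁ b vu₃ vu₁ h13.symm ub up uq hpq bv rfl
  have n4 := m p q b' u₃ u₁ b' vu₃ vu₁ h13.symm ub' up uq hpq bv' rfl
  have n5 := m a a' b u₃ u₂ b vu₃ vu₂ h23.symm ub ua ua' haa bv rfl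
  have n6 := m a a' b' u₃ u₂ b' vu₃ vu₂ h23.symm ub' ua ua' haa bv' rfl
  have t1 := t3 p a b
  have t2 := t3 p a b'
  have t5 := t3 p a' b
  have t6 := t3 p a' b'
  have s1 := t3 q a b
  have s2 := t3 q a b'
  have s5 := t3 q a' b
  have s6 := t3 q a' b'
  clear key m h only t3 t4
  simp only [G.adj_comm a p, G.adj_comm a q, G.adj_comm a' p, G.adj_comm a' q, G.adj_comm b p,
    G.adj_comm b q, G.adj_comm b' p, G.adj_comm b' q, G.adj_comm b a, G.adj_comm b a',
    G.adj_comm b' a, G.adj_comm b' a'] at *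
  grind

theorem deg_le_two {V : Type*} [Fintype V] {G : SimpleGraph V} (t3 : T3 G) (t4 : T4 G)
    (A : Set V) : ShedOn G A → ∀ v ∈ A, ∀ x ∈ A, ∀ y ∈ A, ∀ z ∈ A, G.Adj v x → G.Adj v y →
      G.Adj v z → x ≠ y → x ≠ z → y ≠ z → False := by
  induction A using WellFoundedLT.induction with
  | ind A ih =>
  intro h
  have h3 : ∀ x ∈ A, ∀ y ∈ A, ∀ c, x ≠ y → G.Adj x c → G.Adj c y → ∀ p ∈ A, ∀ q ∈ A, ∀ r ∈ A,
      ∀ s ∈ A, G.Adj y p → G.Adj y q → G.Adj y r → G.Adj y s → p ≠ q → p ≠ r → p ≠ s → q ≠ r →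
      q ≠ s → r ≠ s → False := by
    intro x hx y hy c hxy xc cy
    have nxy : ¬ G.Adj x y := fun e => t3 x c y xc cy e
    have key : ∀ p ∈ A, G.Adj y p → c ≠ p → p ∈ {y | y ∈ A ∧ y ≠ x ∧ ¬ G.Adj x y} := by
      intro p hp yp cp
      refine ⟨hp, ?_, fun e => cp (t4 x c y p xc cy e yp.symm hxy)⟩
      rintro rfl
      exact nxy yp.symm
    have IH := ih {y | y ∈ A ∧ y ≠ x ∧ ¬ G.Adj x y} (by
      refine ⟨fun y hy => hy.1, fun hs => (hs hx).2.1 rfl⟩) (shedOn_diff G A h x hx) y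
      ⟨hy, hxy.symm, nxy⟩
    intro p hp q hq r hr s hs yp yq yr ys pq pr ps qr qs rs
    have kp := key p hp yp
    have kq := key q hq yq
    have kr := key r hr yr
    have ks := key s hs ys
    by_cases e1 : c = p
    · exact IH q (kq (by rwa [e1])) r (kr (by rwa [e1])) s (ks (by rwa [e1])) yq yr ys qr qs rs
    by_cases e2 : c = q
    · exact IH p (kp e1) r (kr (by rwa [e2])) s (ks (by rwa [e2])) yp yr ys pr ps rs
    by_cases e3 : c = r
    · exact IH p (kp e1) q (kq e2) s (ks (by rwa [e3])) yp yq ys pq ps qs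
    exact IH p (kp e1) q (kq e2) r (kr e3) yp yq yr pq pr qr
  intro v hv x hx y hy z hz vx vy vz xy xz yz
  obtain ⟨p, hp, q, hq, pq, pv, qv, xp, xq⟩ := ge3 t3 t4 h hv hx hy hz vx vy vz xy xz yz
  obtain ⟨a, ha, a', ha', aa, av, av', ya, ya'⟩ :=
    ge3 t3 t4 h hv hy hx hz vy vx vz xy.symm yz xz
  obtain ⟨b, hb, b', hb', bb, bv, bv', zb, zb'⟩ :=
    ge3 t3 t4 h hv hz hx hy vz vx vy xz.symm yz.symm xy
  refine final3 t3 t4 h hv vx vy vz xy xz yz ?_ hp hq ha ha' hb hb' pq aa bb xp xq ya ya' zb zb'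
    pv qv av av' bv bv'
  intro u hu vu
  by_contra! hc
  exact h3 p hp v hv x pv xp.symm vx.symm u hu x hx y hy z hz vu vx vy vz hc.1 hc.2.1 hc.2.2
    xy xz yz

theorem closed_univ {V : Type*} {G : SimpleGraph V} (hc : G.Connected) (S : Set V) (v : V)
    (hv : v ∈ S) (hS : ∀ a ∈ S, ∀ b, G.Adj a b → b ∈ S) (x : V) : x ∈ S := by
  obtain ⟨w⟩ := hc.preconnected v x
  induction w with
  | nil => exact hv
  | cons h _ ih => exact ih (hS _ hv _ h)

/-- The only connected graphs with girth at least 5 in the class `W₂`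
are `C₅` and `K₂`. -/
theorem stmt4 {V : Type*} [Fintype V] (G : SimpleGraph V) (hconn : G.Connected)
    (hgirth : 5 ≤ G.egirth) (hW2 : W2 G) :
    Nonempty (G ≃g cycleGraph 5) ∨ Nonempty (G ≃g (⊤ : SimpleGraph (Fin 2))) := by
  have t3 := t3_of G hgirth
  have t4 := t4_of G hgirth
  have h := shedOn_univ G hW2
  have d2 := deg_le_two t3 t4 Set.univ h
  obtain ⟨v₀⟩ := hconn.nonempty
  by_cases hd : ∃ v u₁ u₂, G.Adj v u₁ ∧ G.Adj v u₂ ∧ u₁ ≠ u₂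
  · left
    obtain ⟨v, u₁, u₂, v1, v2, h12⟩ := hd
    have n12 : ¬ G.Adj u₁ u₂ := fun e => t3 v u₁ u₂ v1 e v2
    obtain ⟨w₁, -, uw1, nw1⟩ := shed1 h (v := u₁) (a := u₂) trivial trivial h12.symm n12
    obtain ⟨w₂, -, uw2, nw2⟩ := shed1 h (v := u₂) (a := u₁) trivial trivial h12
      (fun e => n12 e.symm)
    have w1v : w₁ ≠ v := by rintro rfl; exact nw1 v2
    have w2v : w₂ ≠ v := by rintro rfl; exact nw2 v1
    have nv1 : ¬ G.Adj v w₁ := fun e => t3 v u₁ w₁ v1 uw1 e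
    have nv2 : ¬ G.Adj v w₂ := fun e => t3 v u₂ w₂ v2 uw2 e
    have only : ∀ a b c d, G.Adj a b → G.Adj a c → b ≠ c → G.Adj a d → d = b ∨ d = c := by
      intro a b c d ab ac bc ad
      by_contra! hc
      exact d2 a trivial b trivial c trivial d trivial ab ac ad bc hc.1.symm hc.2.symm
    have ww : G.Adj w₁ w₂ := by
      by_contra hn
      obtain ⟨u, -, vu, n1, n2⟩ := shed2 h (v := v) trivial trivial trivial w1v w2v nv1 nv2 hn
      rcases only v u₁ u₂ u v1 v2 h12 vu with rfl | rfl
      · exact n1 uw1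
      · exact n2 uw2
    have n12' : ¬ G.Adj u₁ w₂ := fun e => nw2 e.symm
    have n21' : ¬ G.Adj u₂ w₁ := fun e => nw1 e.symm
    have e1 : u₁ ≠ w₂ := by rintro rfl; exact nv2 v1
    have e2 : u₂ ≠ w₁ := by rintro rfl; exact nv1 v2
    have all : ∀ x, x ∈ ({v, u₁, w₁, w₂, u₂} : Set V) := by
      refine closed_univ hconn _ v (by simp) ?_
      have o1 := only v u₁ u₂
      have o2 := fun d => only u₁ v w₁ d v1.symm uw1 w1v.symm
      have o3 := fun d => only u₂ v w₂ d v2.symm uw2 w2v.symm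
      have o4 := fun d => only w₁ u₁ w₂ d uw1.symm ww e1
      have o5 := fun d => only w₂ u₂ w₁ d uw2.symm ww.symm e2
      intro a ha b hab
      simp only [Set.mem_insert_iff, Set.mem_singleton_iff] at ha ⊢
      rcases ha with rfl | rfl | rfl | rfl | rfl
      · rcases o1 b v1 v2 h12 hab with r | r <;> simp [r]
      · rcases o2 b hab with r | r <;> simp [r]
      · rcases o4 b hab with r | r <;> simp [r]
      · rcases o5 b hab with r | r <;> simp [r]
      · rcases o3 b hab with r | r <;> simp [r]
    let f : Fin 5 → V := ![v, u₁, w₁, w₂, u₂]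
    have hvu1 := v1.ne
    have hvu2 := v2.ne
    have huw1 := uw1.ne
    have huw2 := uw2.ne
    have hww := ww.ne
    have hinj : Function.Injective f := by
      intro i j hij
      fin_cases i <;> fin_cases j <;>
        first
        | rfl
        | exact absurd hij (by assumption)
        | exact absurd hij.symm (by assumption)
    have hsurj : Function.Surjective f := by
      intro x
      rcases all x with rfl | rfl | rfl | rfl | rfl
      exacts [⟨0, rfl⟩, ⟨1, rfl⟩, ⟨2, rfl⟩, ⟨3, rfl⟩, ⟨4, rfl⟩]
    have hadj : ∀ i j, G.Adj (f i) (f j) ↔ (cycleGraph 5).Adj i j := by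
      have s1 := v1.symm
      have s2 := v2.symm
      have s3 := uw1.symm
      have s4 := uw2.symm
      have s5 := ww.symm
      have r1 := fun e => nv1 (G.adj_symm e)
      have r2 := fun e => nv2 (G.adj_symm e)
      have r3 := fun e => n12 (G.adj_symm e)
      intro i j
      rw [cycleGraph_adj]
      fin_cases i <;> fin_cases j <;>
        first
        | exact iff_of_true (by assumption) (by decide)
        | exact iff_of_false (by assumption) (by decide)
        | exact iff_of_false (G.loopless.irrefl _) (by decide)
    exact ⟨(RelIso.mk (Equiv.ofBijective f ⟨hinj, hsurj⟩) (by
      intro i j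
      exact hadj i j) : cycleGraph 5 ≃g G).symm⟩
  · right
    push Not at hd
    obtain ⟨u, -, vu, -⟩ := h v₀ trivial ∅ (by simp) (by simp [IsIndep]) (by simp)
    have all : ∀ x, x ∈ ({v₀, u} : Set V) := by
      refine closed_univ hconn _ v₀ (by simp) ?_
      intro a ha b hab
      rcases ha with rfl | rfl
      · simp [hd a b u hab vu]
      · simp [hd a b v₀ hab vu.symm]
    let f : Fin 2 → V := ![v₀, u]
    have hinj : Function.Injective f := by
      have := vu.ne
      intro i j hij
      fin_cases i <;> fin_cases j <;>
        first
        | rfl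
        | exact absurd hij (by assumption)
        | exact absurd hij.symm (by assumption)
    have hsurj : Function.Surjective f := by
      intro x
      rcases all x with rfl | rfl
      exacts [⟨0, rfl⟩, ⟨1, rfl⟩]
    have hadj : ∀ i j, G.Adj (f i) (f j) ↔ (⊤ : SimpleGraph (Fin 2)).Adj i j := by
      have := vu.symm
      intro i j
      fin_cases i <;> fin_cases j <;> simp_all [f]
    exact ⟨(RelIso.mk (Equiv.ofBijective f ⟨hinj, hsurj⟩) (by
      intro i j
      exact hadj i j) : (⊤ : SimpleGraph (Fin 2)) ≃g G).symm⟩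
end

section
/- Let G be a well-covered graph. Then the following are equivalent: (1) G belongs to the class W2; (2) for every vertex v ∈ V(G) and every maximal independent set S of the induced subgraph G[V(G) \ N[v]], the independence number of the induced subgraph on N(v) \ N(S) equals 1. -/
open SimpleGraph

theorem indep_insert {V : Type*} {G : SimpleGraph V} {S : Set V} {u : V} (hS : IsIndep G S)
    (h : ∀ b ∈ S, ¬ G.Adj u b) : IsIndep G (insert u S) := by
  intro a ha b hb hab hadj
  rcases ha with rfl | ha <;> rcases hb with rfl | hb
  · exact hab rfl
  · exact h b hb hadj
  · exact h a ha hadj.symm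
  · exact hS ha hb hab hadj

theorem exists_max_superset {V : Type*} [Fintype V] {G : SimpleGraph V} (hwc : WellCovered G)
    {S : Set V} (hS : IsIndep G S) : ∃ T, S ⊆ T ∧ IsMaxIndep G T := by
  obtain ⟨T, hST, hT⟩ := (Set.toFinite {T : Set V | IsIndep G T}).exists_le_maximal hS
  refine ⟨T, hST, hwc T ⟨Set.subset_univ _, hT.prop, fun T' _ hT' h => ?_⟩⟩
  exact Set.Subset.antisymm h (hT.le_of_ge hT' h)

theorem mem_compl_closed {V : Type*} {G : SimpleGraph V} {v u : V} :
    u ∈ (closedNbhd G {v})ᶜ ↔ u ≠ v ∧ ¬ G.Adj v u := by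
  simp [closedNbhd]

theorem exists_disjoint_max {V : Type*} [Fintype V] {G : SimpleGraph V}
    (h : ∀ v : V, ∀ S : Set V, IsMaximalIndepOn G (closedNbhd G {v})ᶜ S →
      alphaOn G (G.neighborSet v \ openNbhd G S) = 1) {A B : Set V} (hB : IsIndep G B)
    (hAB : Disjoint A B) (n : ℕ) :
    ∀ T, IsMaxIndep G T → A ⊆ T → (T ∩ B).ncard = n →
      ∃ T', A ⊆ T' ∧ IsMaxIndep G T' ∧ Disjoint T' B := by
  induction n with
  | zero =>
    intro T hT hA hn
    refine ⟨T, hA, hT, ?_⟩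
    rw [Set.ncard_eq_zero] at hn
    exact Set.disjoint_iff_inter_eq_empty.mpr hn
  | succ n ih =>
    intro T hT hA hn
    obtain ⟨v, hvT, hvB⟩ : (T ∩ B).Nonempty := by
      rw [← Set.ncard_pos]; omega
    have hmax : IsMaximalIndepOn G (closedNbhd G {v})ᶜ (T \ {v}) := by
      refine ⟨?_, hT.2.1.mono Set.diff_subset, ?_⟩
      · intro x hx
        exact mem_compl_closed.mpr ⟨hx.2, hT.2.1 hvT hx.1 (Ne.symm hx.2)⟩
      · intro T' hT' hi hsub
        refine Set.eq_of_subset_of_ncard_le hsub ?_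
        have h1 := hT.2.2 (insert v T') (Set.subset_univ _)
          (indep_insert hi fun b hb => (mem_compl_closed.mp (hT' hb)).2)
        rw [Set.ncard_insert_of_notMem (fun hv => (mem_compl_closed.mp (hT' hv)).1 rfl)] at h1
        have h2 := Set.ncard_diff_singleton_add_one hvT
        omega
    have hα := h v _ hmax
    have hne : {n | ∃ S, S ⊆ G.neighborSet v \ openNbhd G (T \ {v}) ∧ IsIndep G S ∧
        S.ncard = n}.Nonempty := ⟨0, ∅, by simp [IsIndep]⟩
    have hbd : BddAbove {n | ∃ S, S ⊆ G.neighborSet v \ openNbhd G (T \ {v}) ∧ IsIndep G S ∧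
        S.ncard = n} := by
      refine ⟨(Set.univ : Set V).ncard, ?_⟩
      rintro _ ⟨S, -, -, rfl⟩
      exact Set.ncard_le_ncard (Set.subset_univ _)
    have hm := Nat.sSup_mem hne hbd
    rw [alphaOn] at hα
    rw [hα] at hm
    obtain ⟨S, hS, -, hS1⟩ := hm
    obtain ⟨u, rfl⟩ := Set.ncard_eq_one.mp hS1
    obtain ⟨huv, huS⟩ := hS rfl
    have huv : G.Adj v u := huv
    have huT : u ∉ T := fun hu => hT.2.1 hvT hu huv.ne huv
    have huB : u ∉ B := fun hu => hB hvB hu huv.ne huv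
    have huadj : ∀ b ∈ T \ {v}, ¬ G.Adj u b := fun b hb hadj =>
      huS ⟨Or.inr ⟨b, hb, hadj.symm⟩, fun hu => huT hu.1⟩
    refine ih (insert u (T \ {v})) ⟨Set.subset_univ _, ?_, ?_⟩ ?_ ?_
    · exact indep_insert (hT.2.1.mono Set.diff_subset) huadj
    · intro T' hT' hi
      rw [Set.ncard_insert_of_notMem (fun hu => huT hu.1), Set.ncard_diff_singleton_add_one hvT]
      exact hT.2.2 T' hT' hi
    · intro a ha
      exact Or.inr ⟨hA ha, fun hav => Set.disjoint_left.mp hAB ha (hav ▸ hvB)⟩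
    · have he : insert u (T \ {v}) ∩ B = (T ∩ B) \ {v} := by
        ext x
        simp only [Set.mem_inter_iff, Set.mem_insert_iff, Set.mem_diff, Set.mem_singleton_iff]
        constructor
        · rintro ⟨rfl | h1, h2⟩
          · exact absurd h2 huB
          · tauto
        · tauto
      rw [he]
      have := Set.ncard_diff_singleton_add_one (show v ∈ T ∩ B from ⟨hvT, hvB⟩)
      omega

/-- A well-covered graph `G` is in `W₂` iff for every vertex `v` and every
maximal independent set `S` of `G[V(G) \ N[v]]`, the independence number of the induced
subgraph on `N(v) \ N(S)` equals 1. -/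
theorem stmt5 {V : Type*} [Fintype V] (G : SimpleGraph V) (hwc : WellCovered G) :
    W2 G ↔ ∀ v : V, ∀ S : Set V, IsMaximalIndepOn G (closedNbhd G {v})ᶜ S →
      alphaOn G (G.neighborSet v \ openNbhd G S) = 1 := by
  constructor
  · intro hW v S hS
    have hvS : v ∉ S := fun hv => (mem_compl_closed.mp (hS.1 hv)).1 rfl
    have hvi : IsIndep G (insert v S) :=
      indep_insert hS.2.1 fun b hb => (mem_compl_closed.mp (hS.1 hb)).2
    have hmax : IsMaxIndep G (insert v S) := by
      refine hwc _ ⟨Set.subset_univ _, hvi, fun T _ hT hsub => ?_⟩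
      refine Set.Subset.antisymm hsub fun x hx => ?_
      by_cases hxv : x = v
      · exact Or.inl hxv
      have hvT : v ∈ T := hsub (Or.inl rfl)
      have := hS.2.2 (T \ {v}) (fun y hy => mem_compl_closed.mpr
        ⟨hy.2, hT hvT hy.1 (Ne.symm hy.2)⟩) (hT.mono Set.diff_subset)
        (fun y hy => ⟨hsub (Or.inr hy), fun hyv => hvS (hyv ▸ hy)⟩)
      right
      rw [this]
      exact ⟨hx, hxv⟩
    have hcard := Set.ncard_insert_of_notMem hvS
    apply le_antisymm
    · refine csSup_le ⟨0, ∅, by simp [IsIndep]⟩ ?_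
      rintro _ ⟨T, hT, hi, rfl⟩
      have hd : Disjoint T S := by
        rw [Set.disjoint_left]
        intro x hx hxS
        exact (mem_compl_closed.mp (hS.1 hxS)).2 (hT hx).1
      have hcross : ∀ a ∈ T, ∀ b ∈ S, ¬ G.Adj a b := fun a ha b hb hadj =>
        (hT ha).2 ⟨Or.inr ⟨b, hb, hadj.symm⟩, Set.disjoint_left.mp hd ha⟩
      have hu : IsIndep G (T ∪ S) := by
        rintro a (ha | ha) b (hb | hb) hab hadj
        · exact hi ha hb hab hadj
        · exact hcross a ha b hb hadj
        · exact hcross b hb a ha hadj.symm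
        · exact hS.2.1 ha hb hab hadj
      have := hmax.2.2 _ (Set.subset_univ _) hu
      rw [Set.ncard_union_eq hd, hcard] at this
      omega
    · obtain ⟨T₁, T₂, h1, h2, hT1, hT2, hd⟩ := hW S {v} (Set.subset_univ _) (Set.subset_univ _)
        hS.2.1 (Set.pairwise_singleton _ _) (Set.disjoint_singleton_right.mpr hvS)
      have hlt : S.ncard < T₁.ncard := by
        have := hT1.2.2 _ (Set.subset_univ _) hvi
        omega
      obtain ⟨u, hu, huS⟩ := Set.exists_mem_notMem_of_ncard_lt_ncard hlt
      have huv : u ≠ v := by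
        rintro rfl
        exact Set.disjoint_left.mp hd hu (h2 rfl)
      have huadj : ∀ b ∈ S, ¬ G.Adj u b := fun b hb =>
        hT1.2.1 hu (h1 hb) (fun e => huS (e ▸ hb))
      have hvu : G.Adj v u := by
        by_contra hn
        have := hS.2.2 (insert u S) (Set.insert_subset (mem_compl_closed.mpr ⟨huv, hn⟩) hS.1)
          (indep_insert hS.2.1 huadj) (Set.subset_insert _ _)
        exact huS (this ▸ Set.mem_insert u S)
      refine le_csSup ⟨(Set.univ : Set V).ncard, ?_⟩ ⟨{u}, ?_, Set.pairwise_singleton _ _,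
        Set.ncard_singleton u⟩
      · rintro _ ⟨S, -, -, rfl⟩
        exact Set.ncard_le_ncard (Set.subset_univ _)
      · rintro _ rfl
        refine ⟨hvu, ?_⟩
        rintro ⟨hc | ⟨s, hs, hadj⟩, -⟩
        · exact huS hc
        · exact huadj s hs hadj.symm
  · intro h A B _ _ hA hB hAB
    obtain ⟨T, hAT, hT⟩ := exists_max_superset hwc hA
    obtain ⟨T₁, hA1, hT1, hd1⟩ := exists_disjoint_max h hB hAB _ T hT hAT rfl
    obtain ⟨U, hBU, hU⟩ := exists_max_superset hwc hB
    obtain ⟨T₂, hB2, hT2, hd2⟩ := exists_disjoint_max h hT1.2.1 hd1.symm _ U hU hBU rfl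
    exact ⟨T₁, T₂, hA1, hB2, hT1, hT2, hd2.symm⟩
end

section
/- Let G be a graph containing no cycle of length 5 (as a subgraph), and let v ∈ V(G). Then v is a shedding vertex if and only if N2(v) does not dominate N(v). -/
open SimpleGraph

/-- In a graph with no cycle of length 5, a vertex `v` is shedding iff
`N₂(v)` does not dominate `N(v)`. -/
theorem stmt6 {V : Type*} [Fintype V] (G : SimpleGraph V)
    (h5 : CycleFree G 5) (v : V) :
    Shedding G v ↔ ¬ Dominates G (N2 G v) (G.neighborSet v) := by
  constructor
  · intro hsh hdom
    obtain ⟨S, hS⟩ := (Set.toFinite {S : Set V | S ⊆ N2 G v ∧ IsIndep G S}).exists_maximal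
      ⟨∅, Set.empty_subset _, Set.pairwise_empty _⟩
    obtain ⟨hS2, hSi⟩ := hS.prop
    have hdisj : Disjoint S (closedNbhd G {v}) := by
      rw [Set.disjoint_left]
      intro a ha hav
      obtain ⟨h1, h2, -⟩ := hS2 ha
      rcases hav with h | ⟨s, hs, h⟩
      · exact h1 h
      · obtain rfl : s = v := hs
        exact h2 h
    obtain ⟨u, hu, hui⟩ := hsh S hdisj hSi
    have hvu : G.Adj v u := hu
    have hnu : ∀ s ∈ S, ¬ G.Adj u s := fun s hs hadj =>
      hui (Set.mem_insert _ _) (Set.mem_insert_of_mem _ hs) hadj.ne hadj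
    rcases hdom hu with h | ⟨x, hx, hxu⟩
    · exact h.2.1 hvu
    have hxS : x ∉ S := fun h => hnu x h hxu.symm
    have hs : ∃ s ∈ S, G.Adj x s := by
      by_contra hcon
      push Not at hcon
      apply hxS
      refine hS.le_of_ge (y := insert x S) ⟨Set.insert_subset hx hS2, ?_⟩
        (Set.subset_insert _ _) (Set.mem_insert _ _)
      refine hSi.insert ?_
      exact fun b hb _ => ⟨hcon b hb, fun h => hcon b hb h.symm⟩
    obtain ⟨s, hs, hxs⟩ := hs
    obtain ⟨hsv, hnvs, w, hvw, hws⟩ := hS2 hs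
    obtain ⟨hxv, hnvx, -⟩ := hx
    have hwu : w ≠ u := by
      rintro rfl
      exact hnu s hs hws
    have hxw : x ≠ w := by
      rintro rfl
      exact hnvx hvw
    have hus : u ≠ s := by
      rintro rfl
      exact hnvs hvu
    refine h5 v (.cons hvu (.cons hxu.symm (.cons hxs (.cons hws.symm (.cons hvw.symm .nil))))) ?_ rfl
    have e1 := hvu.ne
    have e2 := hxu.ne
    have e3 := hxs.ne
    have e4 := hws.ne
    have e5 := hvw.ne
    rw [Walk.cons_isCycle_iff]
    simp [Walk.isPath_def]
    grind
  · intro hnd S hdisj hSi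
    by_contra hcon
    push Not at hcon
    apply hnd
    intro u hu
    have hvu : G.Adj v u := hu
    by_contra hnu
    apply hcon u hu
    refine hSi.insert ?_
    have key : ∀ b ∈ S, ¬ G.Adj u b := by
      intro b hb hub
      apply hnu
      right
      refine ⟨b, ⟨?_, ?_, u, hvu, hub⟩, hub.symm⟩
      · rintro rfl
        exact Set.disjoint_left.1 hdisj hb (Or.inl rfl)
      · exact fun h => Set.disjoint_left.1 hdisj hb (Or.inr ⟨v, rfl, h⟩)
    exact fun b hb _ => ⟨key b hb, fun h => key b hb h.symm⟩
end

section
/- Let G be a graph containing no cycle of length 5 (as a subgraph), and let v ∈ V(G). Then every maximal independent set of the induced subgraph G[N2(v)] dominates N(v) ∩ N(N2(v)). -/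
open SimpleGraph

/-- In a graph with no cycle of length 5, every maximal independent set of
`G[N₂(v)]` dominates `N(v) ∩ N(N₂(v))`. -/
theorem stmt7 {V : Type*} [Fintype V] (G : SimpleGraph V)
    (h5 : CycleFree G 5) (v : V) (S : Set V)
    (hS : IsMaximalIndepOn G (N2 G v) S) :
    Dominates G S (G.neighborSet v ∩ openNbhd G (N2 G v)) := by
  rintro x ⟨hvx, hx⟩
  have hvx : G.Adj v x := hvx
  obtain ⟨hSA, hI, hM⟩ := hS
  obtain ⟨hx1, hx2⟩ := hx
  rcases hx1 with hx1 | ⟨y, hy, hyx⟩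
  · exact absurd hx1 hx2
  by_contra hcon
  have hno : ∀ s ∈ S, ¬ G.Adj s x := fun s hs ha => hcon (Or.inr ⟨s, hs, ha⟩)
  have hyS : y ∉ S := fun h => hno y h hyx
  have hex : ∃ s ∈ S, G.Adj y s := by
    by_contra hne
    push Not at hne
    have h := hM (insert y S) (Set.insert_subset hy hSA) (by
      intro a ha b hb hab
      rcases ha with rfl | ha <;> rcases hb with rfl | hb
      · exact absurd rfl hab
      · exact hne b hb
      · exact fun h => hne a ha h.symm
      · exact hI ha hb hab) (Set.subset_insert y S)
    exact hyS (h ▸ Set.mem_insert y S)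
  obtain ⟨s, hs, hys⟩ := hex
  obtain ⟨hsv, hvs, w, hvw, hws⟩ := hSA hs
  obtain ⟨hyv, hvy, -⟩ := hy
  have hwx : w ≠ x := fun h => hno s hs (h ▸ hws.symm)
  have hyw : y ≠ w := fun h => hvy (h ▸ hvw)
  have hsx : s ≠ x := fun h => hvs (h ▸ hvx)
  refine h5 v (.cons hvx (.cons hyx.symm (.cons hys (.cons hws.symm (.cons hvw.symm .nil))))) ?_ rfl
  have e1 := hvx.ne
  have e2 := hyx.ne
  have e3 := hys.ne
  have e4 := hws.ne
  have e5 := hvw.ne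
  rw [Walk.isCycle_def, Walk.isTrail_def]
  refine ⟨?_, by simp, ?_⟩
  · simp
    grind
  · simp
    grind
end

section
/- Let G be a graph containing no cycle of length 5 (as a subgraph), and let v ∈ V(G). If N2(v) dominates N(v), then every maximal independent set of the induced subgraph G[N2(v)] dominates N(v). -/
open SimpleGraph

/-- In a graph with no cycle of length 5, if `N₂(v)` dominates `N(v)` then
every maximal independent set of `G[N₂(v)]` dominates `N(v)`. -/
theorem stmt8 {V : Type*} [Fintype V] (G : SimpleGraph V)
    (h5 : CycleFree G 5) (v : V)
    (hdom : Dominates G (N2 G v) (G.neighborSet v))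
    (S : Set V) (hS : IsMaximalIndepOn G (N2 G v) S) :
    Dominates G S (G.neighborSet v) := by
  obtain ⟨hSA, hind, hmax⟩ := hS
  intro u hu
  by_contra hnu
  have hvu : G.Adj v u := hu
  have hnS : ∀ s ∈ S, ¬ G.Adj s u := fun s hs ha => hnu (Or.inr ⟨s, hs, ha⟩)
  rcases hdom hu with hu2 | ⟨w, hw, hwu⟩
  · exact hu2.2.1 hvu
  have hwS : w ∉ S := fun h => hnS w h hwu
  have hex : ∃ s ∈ S, G.Adj w s := by
    by_contra hno
    push Not at hno
    have heq := hmax (insert w S) (Set.insert_subset hw hSA) (by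
      intro a ha b hb hab
      rcases ha with rfl | ha
      · rcases hb with rfl | hb
        · exact absurd rfl hab
        · exact hno b hb
      · rcases hb with rfl | hb
        · exact fun h => hno a ha h.symm
        · exact hind ha hb hab) (Set.subset_insert w S)
    exact hwS (heq ▸ Set.mem_insert w S)
  obtain ⟨s, hs, hws⟩ := hex
  obtain ⟨hsv, hnvs, x, hvx, hxs⟩ := hSA hs
  obtain ⟨hwv, hnvw, -⟩ := hw
  have hxu : x ≠ u := by
    rintro rfl
    exact hnS s hs hxs.symm
  have hus : u ≠ s := by
    rintro rfl
    exact hnvs hvu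
  have hwx : w ≠ x := by
    rintro rfl
    exact hnvw hvx
  let c : G.Walk v v := .cons hvu (.cons hwu.symm (.cons hws (.cons hxs.symm
    (.cons hvx.symm .nil))))
  refine h5 v c ?_ rfl
  have h1 := hvu.ne
  have h2 := hwu.ne
  have h3 := hws.ne
  have h4 := hxs.ne
  have h5 := hvx.ne
  rw [SimpleGraph.Walk.cons_isCycle_iff, SimpleGraph.Walk.isPath_def]
  simp only [SimpleGraph.Walk.support_cons, SimpleGraph.Walk.support_nil,
    SimpleGraph.Walk.edges_cons, SimpleGraph.Walk.edges_nil, List.nodup_cons, List.mem_cons,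
    Sym2.eq_iff, List.not_mem_nil, List.nodup_nil]
  grind
end

section
/- Let G be a graph containing no cycle of length 4 and no cycle of length 6 (as subgraphs), and let v ∈ V(G). Then every connected component of the induced subgraph G[N2(v)] contains at most 2 vertices. -/
open SimpleGraph

/-- There is no path on three vertices inside `N₂(v)`. -/
theorem no_path_three {V : Type*} (G : SimpleGraph V)
    (h4 : CycleFree G 4) (h6 : CycleFree G 6) (v a b c : V)
    (ha : a ∈ N2 G v) (hb : b ∈ N2 G v) (hc : c ∈ N2 G v)
    (hab : G.Adj a b) (hbc : G.Adj b c) : a = c := by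
  by_contra hac
  obtain ⟨hav, hva, p, hvp, hpa⟩ := ha
  obtain ⟨hbv, hvb, -⟩ := hb
  obtain ⟨hcv, hvc, q, hvq, hqc⟩ := hc
  have hab' := hab.ne
  have hbc' := hbc.ne
  have hpa' := hpa.ne
  have hqc' := hqc.ne
  have hvp' := hvp.ne
  have hvq' := hvq.ne
  have hpb : p ≠ b := by rintro rfl; exact hvb hvp
  have hpc : p ≠ c := by rintro rfl; exact hvc hvp
  have hqa : q ≠ a := by rintro rfl; exact hva hvq
  have hqb : q ≠ b := by rintro rfl; exact hvb hvq
  by_cases hpq : p = q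
  · subst hpq
    refine h4 p (.cons hpa (.cons hab (.cons hbc (.cons hqc.symm .nil)))) ?_ rfl
    rw [Walk.cons_isCycle_iff]
    simp [Walk.cons_isPath_iff]
    grind
  · refine h6 v (.cons hvp (.cons hpa (.cons hab (.cons hbc (.cons hqc.symm
      (.cons hvq.symm .nil)))))) ?_ rfl
    rw [Walk.cons_isCycle_iff]
    simp [Walk.cons_isPath_iff]
    grind

/-- In a graph with no cycles of lengths 4 and 6, every connected
component of `G[N₂(v)]` contains at most 2 vertices. -/
theorem stmt13 {V : Type*} [Fintype V] (G : SimpleGraph V)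
    (h4 : CycleFree G 4) (h6 : CycleFree G 6) (v : V) :
    ∀ c : (G.induce (N2 G v)).ConnectedComponent, c.supp.ncard ≤ 2 := by
  intro c
  by_contra! hcon
  have key : ∀ x y : N2 G v, (G.induce (N2 G v)).Reachable x y →
      x = y ∨ G.Adj x y := by
    rintro x y ⟨w⟩
    induction w with
    | nil => exact Or.inl rfl
    | @cons x z y hxz w ih =>
      have hxz' : G.Adj x z := hxz
      rcases ih with rfl | h
      · exact Or.inr hxz'
      · exact Or.inl (Subtype.ext
          (no_path_three G h4 h6 v x z y x.2 z.2 y.2 hxz' h))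
  obtain ⟨x, y, z, hx, hy, hz, hxy, hxz, hyz⟩ :=
    (Set.two_lt_ncard_iff (Set.toFinite _)).1 hcon
  have h1 := (key x y (ConnectedComponent.exact (hx.trans hy.symm))).resolve_left hxy
  have h2 := (key y z (ConnectedComponent.exact (hy.trans hz.symm))).resolve_left hyz
  exact hxz (Subtype.ext (no_path_three G h4 h6 v x y z x.2 y.2 z.2 h1 h2))
end

section
/- Let G be a connected graph in the class W2. If G contains a leaf (a vertex of degree 1), then G is isomorphic to K2. -/
open SimpleGraph

/-- A connected `W₂` graph containing a leaf is isomorphic to `K₂`. -/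
theorem stmt14 {V : Type*} [Fintype V] (G : SimpleGraph V)
    (hconn : G.Connected) (hW2 : W2 G)
    (v : V) (hleaf : (G.neighborSet v).ncard = 1) :
    Nonempty (G ≃g (⊤ : SimpleGraph (Fin 2))) := by
  obtain ⟨u, hu⟩ := Set.ncard_eq_one.mp hleaf
  have hN : ∀ x, G.Adj v x ↔ x = u := fun x => by
    rw [← SimpleGraph.mem_neighborSet, hu, Set.mem_singleton_iff]
  have hvu : G.Adj v u := (hN u).2 rfl
  have key : ∀ w, G.Adj u w → w = v := by
    intro w hw
    by_contra hne
    obtain ⟨T₁, T₂, h1, h2, -, hM2, hd⟩ := hW2 {v} {w} (Set.subset_univ _) (Set.subset_univ _)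
      (Set.pairwise_singleton _ _) (Set.pairwise_singleton _ _)
      (Set.disjoint_singleton.2 (Ne.symm hne))
    have hwT : w ∈ T₂ := h2 rfl
    have hvT : v ∉ T₂ := Set.disjoint_left.1 hd (h1 rfl)
    have huT : u ∉ T₂ := fun h => hM2.2.1 h hwT hw.ne hw
    have hind : IsIndep G (insert v T₂) := by
      intro a ha b hb hab hadj
      rcases ha with rfl | ha
      · rcases hb with rfl | hb
        · exact hab rfl
        · exact huT ((hN b).1 hadj ▸ hb)
      · rcases hb with rfl | hb
        · exact huT ((hN a).1 hadj.symm ▸ ha)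
        · exact hM2.2.1 ha hb hab hadj
    have hle := hM2.2.2 _ (Set.subset_univ _) hind
    rw [Set.ncard_insert_of_notMem hvT (Set.toFinite _)] at hle
    omega
  have walk : ∀ a b : V, G.Walk a b → (a = v ∨ a = u) → (b = v ∨ b = u) := by
    intro a b p
    induction p with
    | nil => exact id
    | cons h _ ih =>
      rintro (rfl | rfl)
      · exact ih (Or.inr ((hN _).1 h))
      · exact ih (Or.inl (key _ h))
  have all : ∀ x, x = v ∨ x = u := fun x =>
    (hconn.preconnected v x).elim fun p => walk v x p (Or.inl rfl)
  have hbij : Function.Bijective (![v, u] : Fin 2 → V) := by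
    constructor
    · intro i j hij
      have h := hvu.ne
      fin_cases i <;> fin_cases j <;> simp_all
    · intro x
      rcases all x with rfl | rfl
      · exact ⟨0, rfl⟩
      · exact ⟨1, rfl⟩
  refine ⟨SimpleGraph.Iso.symm ⟨Equiv.ofBijective _ hbij, ?_⟩⟩
  intro i j
  have h' := hvu.symm
  fin_cases i <;> fin_cases j <;> simp [hvu, h']
end

section
/- Let G be a graph with girth at least 5, and let v be a vertex lying on a cycle C of length 5 such that both neighbors of v on C have degree 2 in G. Then v is a shedding vertex of G. -/
open SimpleGraph

theorem stmt15_aux {V : Type*} [Finite V] (G : SimpleGraph V) (v a b : V) (S : Set V)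
    (hvb : v ≠ b) (e₁ : G.Adj v a) (e₂ : G.Adj a b)
    (hd : (G.neighborSet a).ncard = 2) (hv : v ∉ S) (hb : b ∉ S) (hS : IsIndep G S) :
    IsIndep G (insert a S) := by
  have hsub : ({v, b} : Set V) ⊆ G.neighborSet a := by
    rintro x (rfl | rfl)
    · exact e₁.symm
    · exact e₂
  have heq : ({v, b} : Set V) = G.neighborSet a :=
    Set.eq_of_subset_of_ncard_le hsub (by rw [hd, Set.ncard_pair hvb]) (Set.toFinite _)
  have key : ∀ y ∈ S, ¬ G.Adj a y := by
    intro y hy h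
    have h' : y ∈ ({v, b} : Set V) := by rw [heq]; exact h
    rcases h' with rfl | rfl
    · exact hv hy
    · exact hb hy
  rintro x (rfl | hx) y (rfl | hy) hxy
  · exact absurd rfl hxy
  · exact key y hy
  · exact fun h => key x hx h.symm
  · exact hS hx hy hxy

/-- In a graph with girth at least 5, a vertex lying on a 5-cycle whose
two neighbors on the cycle have degree 2 is a shedding vertex. -/
theorem stmt15 {V : Type*} [Fintype V] (G : SimpleGraph V)
    (hgirth : 5 ≤ G.egirth) (v v₁ v₂ v₃ v₄ : V)
    (hnodup : [v, v₁, v₂, v₃, v₄].Nodup)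
    (e₁ : G.Adj v v₁) (e₂ : G.Adj v₁ v₂) (e₃ : G.Adj v₂ v₃)
    (e₄ : G.Adj v₃ v₄) (e₅ : G.Adj v₄ v)
    (hd₁ : (G.neighborSet v₁).ncard = 2) (hd₄ : (G.neighborSet v₄).ncard = 2) :
    Shedding G v := by
  intro S hdisj hS
  simp only [List.nodup_cons, List.mem_cons, not_or] at hnodup
  have hv : v ∉ S := fun h => Set.disjoint_left.mp hdisj h (Or.inl rfl)
  by_cases h2 : v₂ ∈ S
  · have h3 : v₃ ∉ S := fun h => hS h2 h e₃.ne e₃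
    exact ⟨v₄, e₅.symm, stmt15_aux G v v₄ v₃ S hnodup.1.2.2.1 e₅.symm e₄.symm hd₄ hv h3 hS⟩
  · exact ⟨v₁, e₁, stmt15_aux G v v₁ v₂ S hnodup.1.2.1 e₁ e₂ hd₁ hv h2 hS⟩
end

section
/- Let X = {x1, ..., xn} be a set of Boolean variables and C = {c1, ..., cm} a set of clauses over X, where each clause is a set of literals containing, for each variable, at most one of that variable and its negation. Define a graph G with vertex set {v} ∪ {v_i : 1 ≤ i ≤ m} ∪ {u_{i,l} : 1 ≤ i ≤ m, l ∈ c_i} and edge set consisting of: the edges v v_i for 1 ≤ i ≤ m; the edges v_i u_{i,l} for every l ∈ c_i; and the edges u_{i,l} u_{j,l'} whenever l ∈ c_i, l' ∈ c_j, and l' is the negation of l. Then there exists a truth assignment to X satisfying all clauses of C if and only if v is not a shedding vertex of G. Moreover, G contains no cycle of length 3. -/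
open SimpleGraph

/-- The graph constructed from a SAT instance: a vertex `v` (here `none`), a vertex
`vᵢ` for each clause (here `some (Sum.inl i)`), and a vertex `u_{i,l}` for each clause
`i` and literal `l ∈ cᵢ` (here `some (Sum.inr ⟨i, l⟩)`). Edges: `v vᵢ` for all `i`;
`vᵢ u_{i,l}` for all `l ∈ cᵢ`; and `u_{i,l} u_{j,l'}` whenever `l'` is the negation
of `l`. A literal is a pair of a variable and a Boolean (`true` = positive). -/
def satGraph {X : Type*} {m : ℕ} (c : Fin m → Finset (X × Bool)) :
    SimpleGraph (Option (Fin m ⊕ (Σ i : Fin m, {l : X × Bool // l ∈ c i}))) :=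
  SimpleGraph.fromRel fun a b =>
    match a, b with
    | none, some (Sum.inl _) => True
    | some (Sum.inl i), some (Sum.inr u) => i = u.1
    | some (Sum.inr u), some (Sum.inr w) =>
        (w.2 : X × Bool).1 = (u.2 : X × Bool).1 ∧ (w.2 : X × Bool).2 = !(u.2 : X × Bool).2
    | _, _ => False

lemma sat_none_inl {X : Type*} {m : ℕ} (c : Fin m → Finset (X × Bool)) (i : Fin m) :
    (satGraph c).Adj none (some (Sum.inl i)) := by
  simp [satGraph]

lemma sat_none_inr {X : Type*} {m : ℕ} (c : Fin m → Finset (X × Bool))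
    (u : Σ i : Fin m, {l : X × Bool // l ∈ c i}) :
    ¬ (satGraph c).Adj none (some (Sum.inr u)) := by
  simp [satGraph]

lemma sat_inl_inl {X : Type*} {m : ℕ} (c : Fin m → Finset (X × Bool)) (i j : Fin m) :
    ¬ (satGraph c).Adj (some (Sum.inl i)) (some (Sum.inl j)) := by
  simp [satGraph]

lemma sat_inl_inr {X : Type*} {m : ℕ} (c : Fin m → Finset (X × Bool)) (i : Fin m)
    (u : Σ i : Fin m, {l : X × Bool // l ∈ c i}) :
    (satGraph c).Adj (some (Sum.inl i)) (some (Sum.inr u)) ↔ i = u.1 := by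
  simp [satGraph]

lemma sat_inr_inr {X : Type*} {m : ℕ} (c : Fin m → Finset (X × Bool))
    (u w : Σ i : Fin m, {l : X × Bool // l ∈ c i}) :
    (satGraph c).Adj (some (Sum.inr u)) (some (Sum.inr w)) ↔
      (w.2 : X × Bool).1 = (u.2 : X × Bool).1 ∧ (w.2 : X × Bool).2 = !(u.2 : X × Bool).2 := by
  simp only [satGraph, SimpleGraph.fromRel_adj]
  constructor
  · rintro ⟨_, h | h⟩
    · exact h
    · exact ⟨h.1.symm, by rw [h.2]; simp⟩
  · intro h
    refine ⟨?_, Or.inl h⟩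
    intro e
    simp only [Option.some.injEq, Sum.inr.injEq] at e
    subst e
    have := h.2
    simp at this

lemma sat_no_triangle {X : Type*} {m : ℕ} (c : Fin m → Finset (X × Bool))
    (hvalid : ∀ i : Fin m, ∀ x : X, ¬ ((x, true) ∈ c i ∧ (x, false) ∈ c i))
    (a b d : Option (Fin m ⊕ (Σ i : Fin m, {l : X × Bool // l ∈ c i})))
    (hab : (satGraph c).Adj a b) (hbd : (satGraph c).Adj b d) (hda : (satGraph c).Adj d a) :
    False := by
  have key : ∀ (i : Fin m) (u w : Σ i : Fin m, {l : X × Bool // l ∈ c i}),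
      (satGraph c).Adj (some (Sum.inl i)) (some (Sum.inr u)) →
      (satGraph c).Adj (some (Sum.inr u)) (some (Sum.inr w)) →
      (satGraph c).Adj (some (Sum.inl i)) (some (Sum.inr w)) → False := by
    rintro i ⟨j, ⟨x, p⟩, hu⟩ ⟨k, ⟨y, q⟩, hw⟩ h1 h2 h3
    rw [sat_inl_inr] at h1 h3
    rw [sat_inr_inr] at h2
    simp only at h1 h2 h3
    obtain ⟨rfl, rfl⟩ := h2
    subst h1
    subst h3
    cases p
    · exact hvalid _ _ ⟨hw, hu⟩
    · exact hvalid _ _ ⟨hu, hw⟩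
  rcases a with _ | i | u <;> rcases b with _ | j | v <;> rcases d with _ | k | w
  all_goals first
    | exact hab.ne rfl
    | exact hbd.ne rfl
    | exact hda.ne rfl
    | exact sat_none_inr _ _ hab
    | exact sat_none_inr _ _ hbd
    | exact sat_none_inr _ _ hda
    | exact sat_none_inr _ _ hab.symm
    | exact sat_none_inr _ _ hbd.symm
    | exact sat_none_inr _ _ hda.symm
    | exact sat_inl_inl _ _ _ hab
    | exact sat_inl_inl _ _ _ hbd
    | exact sat_inl_inl _ _ _ hda
    | exact key _ _ _ hab hbd hda.symm
    | exact key _ _ _ hbd hda hab.symm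
    | exact key _ _ _ hda hab hbd.symm
    | skip
  simp only [sat_inr_inr] at hab hbd hda
  have h1 := hab.2
  have h2 := hbd.2
  have h3 := hda.2
  rw [h2, h1] at h3
  simp at h3

/-- For a SAT instance with clauses `c₁, …, c_m` (each clause containing,
for each variable, at most one of the variable and its negation), the instance is
satisfiable iff `v` is not a shedding vertex of the constructed graph `G`; moreover,
`G` contains no cycle of length 3. -/
theorem stmt16 {X : Type*} [Fintype X] [DecidableEq X] {m : ℕ}
    (c : Fin m → Finset (X × Bool))
    (hvalid : ∀ i : Fin m, ∀ x : X, ¬ ((x, true) ∈ c i ∧ (x, false) ∈ c i)) :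
    ((∃ t : X → Bool, ∀ i : Fin m, ∃ l ∈ c i, t l.1 = l.2) ↔
      ¬ Shedding (satGraph c) none) ∧
    CycleFree (satGraph c) 3 := by
  classical
  refine ⟨⟨?_, ?_⟩, ?_⟩
  · rintro ⟨t, ht⟩ hs
    obtain ⟨u, hu, hind⟩ := hs
      {a | ∃ u : Σ i : Fin m, {l : X × Bool // l ∈ c i}, a = some (Sum.inr u) ∧
        t (u.2 : X × Bool).1 = (u.2 : X × Bool).2} (by
        rw [Set.disjoint_left]
        rintro a ⟨u, rfl, _⟩ h
        rcases h with h | ⟨s, hs, h⟩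
        · simp at h
        · rw [Set.mem_singleton_iff] at hs
          subst hs
          exact sat_none_inr _ _ h) (by
        rintro a ⟨u, rfl, hu⟩ b ⟨w, rfl, hw⟩ _ h
        rw [sat_inr_inr] at h
        rw [h.1, h.2, hu] at hw
        simp at hw)
    rcases u with _ | i | w
    · exact (satGraph c).loopless.irrefl _ hu
    · obtain ⟨l, hl, htl⟩ := ht i
      have hadj : (satGraph c).Adj (some (Sum.inl i)) (some (Sum.inr ⟨i, l, hl⟩)) := by
        rw [sat_inl_inr]
      exact hind (Set.mem_insert _ _) (Set.mem_insert_of_mem _ ⟨⟨i, l, hl⟩, rfl, htl⟩)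
        hadj.ne hadj
    · exact sat_none_inr _ _ hu
  · intro hns
    simp only [Shedding, not_forall] at hns
    obtain ⟨S, hd, hS, hno⟩ := hns
    rw [Set.disjoint_left] at hd
    refine ⟨fun x => decide (∃ u : Σ i : Fin m, {l : X × Bool // l ∈ c i},
      some (Sum.inr u) ∈ S ∧ (u.2 : X × Bool) = (x, true)), fun i => ?_⟩
    have hex : ∃ a ∈ S, (satGraph c).Adj (some (Sum.inl i)) a := by
      by_contra hcon
      push Not at hcon
      refine hno ⟨some (Sum.inl i), sat_none_inl c i, ?_⟩
      intro a ha b hb hab hadj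
      rcases ha with rfl | ha
      · rcases hb with rfl | hb
        · exact hab rfl
        · exact hcon b hb hadj
      · rcases hb with rfl | hb
        · exact hcon a ha hadj.symm
        · exact hS ha hb hab hadj
    obtain ⟨a, ha, hadj⟩ := hex
    rcases a with _ | j | w
    · exact (hd ha (Or.inl rfl)).elim
    · exact (sat_inl_inl _ _ _ hadj).elim
    · rw [sat_inl_inr] at hadj
      obtain ⟨k, ⟨x, p⟩, hw⟩ := w
      simp only at hadj
      subst hadj
      refine ⟨(x, p), hw, ?_⟩
      cases p
      · simp only [decide_eq_false_iff_not]
        rintro ⟨u, hu, hux⟩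
        have h : (satGraph c).Adj (some (Sum.inr ⟨i, (x, false), hw⟩)) (some (Sum.inr u)) := by
          rw [sat_inr_inr, hux]
          simp
        exact hS ha hu h.ne h
      · simp only [decide_eq_true_eq]
        exact ⟨_, ha, rfl⟩
  · intro u w _ hlen
    match w, hlen with
    | .cons h1 (.cons h2 (.cons h3 .nil)), _ =>
      exact sat_no_triangle c hvalid _ _ _ h1 h2 h3
end
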